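/- Let P₀ be a probability measure on ℝ^d whose support is contained in the closed ball of radius R centered at the origin, let 0 < δ ≤ 1, and let p_t be the isotropic forward Ornstein–Uhlenbeck marginal density started from P₀, with score s(t,x) := ∇ log p_t(x). Set L₀ := 3R²/(1−e^{−δ})² and L₂ := 1/(1−e^{−δ}). Let T > δ and let 0 = t₀ ≤ t₁ ≤ … ≤ t_N = T−δ be a time schedule with maximal step τ := max_k (t_{k+1}−t_k) ≤ min{1, 1/((L₀+L₂)e)}. Let s_θ satisfy: for each k, s_θ(T−t_k,·) : ℝ^d → ℝ^d is C¹ with ‖∇s_θ(T−t_k,x) + (1−e^{−(T−t_k)})^{−1} I_d‖ ≤ L₀ e^{−(T−t_k)} for all x, and Σ_{k=0}^{N−1} (t_{k+1}−t_k) ∫_{ℝ^d} |s(T−t_k,x) − s_θ(T−t_k,x)|² p_{T−t_k}(x) dx ≤ ε² T. Let ν_N denote the law of the sampling scheme output (with C = I_d). Then there exists a probability measure π on ℝ^d × ℝ^d whose first marginal is the measure with density p_δ and whose second marginal is ν_N, such that ∫ |x−y|² dπ(x,y) ≤ K₂ ( e^{−2T+δ}(R² + d) + ε² T + d τ² ),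 where K₂ := 2 exp( 7 + 12R²/(1−e^{−δ})² + 4/(1−e^{−δ}) ). (Theorem 3.10, the Wasserstein-2 convergence bound for bounded-support targets under early stopping.) -/

import Mathlib

open MeasureTheory Real Matrix ProbabilityTheory

noncomputable section

/-- Marginal density at time `t > 0` of the isotropic forward Ornstein–Uhlenbeck
process started from the probability measure `P₀`. -/
def ouDensityIso {d : ℕ} (P₀ : Measure (EuclideanSpace ℝ (Fin d)))
    (t : ℝ) (x : EuclideanSpace ℝ (Fin d)) : ℝ :=
  (2 * π * (1 - Real.exp (-t))) ^ (-(d : ℝ) / 2) *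
    ∫ y, Real.exp (-‖x - Real.exp (-t / 2) • y‖ ^ 2 / (2 * (1 - Real.exp (-t)))) ∂P₀

/-- Standard Gaussian measure `N(0, I_d)` on `EuclideanSpace ℝ (Fin d)`,
the `d`-fold product of standard real Gaussian measures. -/
def stdGaussE (d : ℕ) : Measure (EuclideanSpace ℝ (Fin d)) :=
  (Measure.pi fun _ : Fin d => gaussianReal 0 1).map
    (EuclideanSpace.equiv (Fin d) ℝ).symm

/-- One step map of the sampling scheme:
`F_k(x) = α_k^{-1/2} (x + (1-α_k) s_θ(T - t_k, x))` with `α_k = exp (t_k - t_{k+1})`. -/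
def stepMap {d : ℕ} (sθ : ℝ → EuclideanSpace ℝ (Fin d) → EuclideanSpace ℝ (Fin d))
    (t : ℕ → ℝ) (T : ℝ) (k : ℕ) (x : EuclideanSpace ℝ (Fin d)) : EuclideanSpace ℝ (Fin d) :=
  (Real.exp (t k - t (k + 1))) ^ (-(1 : ℝ) / 2) •
    (x + (1 - Real.exp (t k - t (k + 1))) • sθ (T - t k) x)

/-- Law of the sampling scheme after `k` steps: `ν₀ = γ` and
`ν_{k+1} = ((F_k)_# ν_k) ∗ ((√(1-α_k) ·)_# γ)`, the convolution being realized as the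
pushforward of the product measure under addition. -/
def schemeLaw {d : ℕ} (γ : Measure (EuclideanSpace ℝ (Fin d)))
    (sθ : ℝ → EuclideanSpace ℝ (Fin d) → EuclideanSpace ℝ (Fin d))
    (t : ℕ → ℝ) (T : ℝ) : ℕ → Measure (EuclideanSpace ℝ (Fin d))
  | 0 => γ
  | (k + 1) =>
      (((schemeLaw γ sθ t T k).map (stepMap sθ t T k)).prod
        (γ.map fun x => Real.sqrt (1 - Real.exp (t k - t (k + 1))) • x)).map
          fun p => p.1 + p.2

/-!
Resampling from the posterior moves along the reverse Ornstein–Uhlenbeck process: if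
`Y = l • X + Z` with `Z` Gaussian and `X'` is drawn from the law of `X` given `Y`, then `Y + η • X'`
has the law of `(l + η) • X + Z`. Iterating with `η → 0` couples the marginals at two times so that
the increment is the drift, given by the posterior mean, plus a martingale part which is small in
`L²`. By Tweedie's formula one step of the integrator with the exact score follows this drift, after
a change of scale that leaves room for the Gaussian noise the integrator adds; the error of such a
step is therefore `O(√d h²)` in `W₂`. The learned step is Lipschitz with constant
`exp (-h / 2 + L (e^{-(u - h)} - e^{-u}))`, whose product over the steps telescopes, so Minkowski's
inequality and a discrete Grönwall recursion add up the local errors and the score errors.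
-/

open scoped ENNReal NNReal InnerProductSpace

variable {E : Type*} [NormedAddCommGroup E] [InnerProductSpace ℝ E]

section StandardGaussian

/-- The density of `stdGaussian E` with respect to the volume. -/
def stdGaussianPDF (z : E) : ℝ := (2 * π) ^ (-(Module.finrank ℝ E : ℝ) / 2) * exp (-‖z‖ ^ 2 / 2)

lemma stdGaussianPDF_pos (z : E) : 0 < stdGaussianPDF z := by
  unfold stdGaussianPDF; positivity

@[fun_prop]
lemma continuous_stdGaussianPDF : Continuous (stdGaussianPDF (E := E)) := by
  unfold stdGaussianPDF; fun_prop

variable [FiniteDimensional ℝ E] [MeasurableSpace E] [BorelSpace E]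

lemma integrable_stdGaussianPDF : Integrable (stdGaussianPDF (E := E)) := by
  have complex_integrable := GaussianFourier.integrable_cexp_neg_mul_sq_norm_add (V := E)
    (b := 1 / 2) (by norm_num) 0 0
  refine (complex_integrable.re.const_mul
    ((2 * π) ^ (-(Module.finrank ℝ E : ℝ) / 2))).congr (ae_of_all _ fun z => ?_)
  have exponent : -(1 / 2 : ℂ) * ‖z‖ ^ 2 + 0 * (⟪0, z⟫_ℝ : ℝ) = ((-‖z‖ ^ 2 / 2 : ℝ) : ℂ) := by
    push_cast; ring
  simp only [exponent, ← Complex.ofReal_exp, RCLike.re_to_complex, Complex.ofReal_re,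
    stdGaussianPDF]

lemma charFun_withDensity_stdGaussianPDF (t : E) :
    charFun (volume.withDensity fun z : E => ENNReal.ofReal (stdGaussianPDF z)) t =
      Complex.exp (-‖t‖ ^ 2 / 2) := by
  set c : ℝ := -(Module.finrank ℝ E : ℝ) / 2 with hc
  have integrand (z : E) :
      (ENNReal.ofReal (stdGaussianPDF z)).toReal • Complex.exp ((⟪z, t⟫_ℝ : ℝ) * Complex.I) =
        ((2 * π : ℝ) : ℂ) ^ (c : ℂ) *
          Complex.exp (-(1 / 2) * (‖z‖ : ℂ) ^ 2 + Complex.I * (⟪t, z⟫_ℝ : ℝ)) := by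
    rw [ENNReal.toReal_ofReal (stdGaussianPDF_pos z).le, stdGaussianPDF, Complex.real_smul,
      Complex.ofReal_mul, Complex.ofReal_cpow (by positivity), mul_assoc, Complex.ofReal_exp,
      ← Complex.exp_add, real_inner_comm]
    congr 2
    push_cast; ring
  have constants : ((2 * π : ℝ) : ℂ) ^ (c : ℂ) *
      ((π : ℂ) / (1 / 2)) ^ ((Module.finrank ℝ E : ℂ) / 2) = 1 := by
    have two_pi : (π : ℂ) / (1 / 2) = ((2 * π : ℝ) : ℂ) := by push_cast; ring
    have exponents : (c : ℂ) + (Module.finrank ℝ E : ℂ) / 2 = 0 := by rw [hc]; push_cast; ring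
    rw [two_pi, ← Complex.cpow_add _ _ (by exact_mod_cast (by positivity : 2 * π ≠ 0)), exponents,
      Complex.cpow_zero]
  rw [charFun_apply, integral_withDensity_eq_integral_toReal_smul₀ (by fun_prop) (by simp)]
  simp_rw [integrand]
  rw [integral_const_mul, GaussianFourier.integral_cexp_neg_mul_sq_norm_add (by norm_num),
    ← mul_assoc, constants, one_mul, Complex.I_sq]
  congr 1
  ring

lemma stdGaussian_eq_withDensity :
    stdGaussian E = volume.withDensity fun z => ENNReal.ofReal (stdGaussianPDF z) := by
  have : IsFiniteMeasure (volume.withDensity fun z : E => ENNReal.ofReal (stdGaussianPDF z)) :=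
    isFiniteMeasure_withDensity_ofReal integrable_stdGaussianPDF.2
  refine Measure.ext_of_charFun (funext fun t => ?_)
  rw [charFun_stdGaussian, charFun_withDensity_stdGaussianPDF]

lemma lintegral_add_left_stdGaussian (v : E) {g : E → ℝ≥0∞} (hg : Measurable g) :
    ∫⁻ z, g (v + z) ∂stdGaussian E =
      ∫⁻ z, ENNReal.ofReal (exp (⟪z, v⟫_ℝ - ‖v‖ ^ 2 / 2)) * g z ∂stdGaussian E := by
  have density_measurable : Measurable fun z : E => ENNReal.ofReal (stdGaussianPDF z) := by fun_prop
  rw [stdGaussian_eq_withDensity, lintegral_withDensity_eq_lintegral_mul _ density_measurable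
      (by fun_prop), lintegral_withDensity_eq_lintegral_mul _ density_measurable (by fun_prop)]
  conv_rhs => rw [← lintegral_add_left_eq_self _ v]
  refine lintegral_congr fun z => ?_
  simp only [Pi.mul_apply]
  rw [← mul_assoc, ← ENNReal.ofReal_mul (stdGaussianPDF_pos _).le]
  congr 2
  simp only [stdGaussianPDF, mul_assoc, ← exp_add]
  congr 2
  rw [norm_add_sq_real, inner_add_left, real_inner_self_eq_norm_sq, real_inner_comm]
  ring

lemma integral_norm_sq_stdGaussian : ∫ z, ‖z‖ ^ 2 ∂stdGaussian E = Module.finrank ℝ E := by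
  have coordinate_memLp (i) :
      MemLp (fun z => ⟪stdOrthonormalBasis ℝ E i, z⟫_ℝ) 2 (stdGaussian E) :=
    (innerSL ℝ (stdOrthonormalBasis ℝ E i)).comp_memLp' IsGaussian.memLp_two_id
  have coordinate (i) : ∫ z, ⟪stdOrthonormalBasis ℝ E i, z⟫_ℝ ^ 2 ∂stdGaussian E = 1 := by
    have variance := variance_dual_stdGaussian (innerSL ℝ (stdOrthonormalBasis ℝ E i))
    rw [variance_eq_integral (by fun_prop), integral_strongDual_stdGaussian] at variance
    simpa using variance
  simp_rw [← (stdOrthonormalBasis ℝ E).sum_sq_inner_right]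
  rw [integral_finsetSum _ fun i _ => (coordinate_memLp i).integrable_sq]
  simp [coordinate]

lemma map_smul_stdGaussian_conv {a b c : ℝ} (h : c ^ 2 = a ^ 2 + b ^ 2) :
    (stdGaussian E).map (a • ·) ∗ (stdGaussian E).map (b • ·) = (stdGaussian E).map (c • ·) := by
  have (r : ℝ) : IsProbabilityMeasure ((stdGaussian E).map (r • ·)) :=
    Measure.isProbabilityMeasure_map (by fun_prop)
  refine Measure.ext_of_charFun (funext fun t => ?_)
  rw [charFun_conv, charFun_map_smul, charFun_map_smul, charFun_map_smul]
  simp only [charFun_stdGaussian, ← Complex.exp_add, norm_smul, norm_eq_abs]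
  congr 1
  norm_cast
  simp only [mul_pow, sq_abs, h]
  ring

end StandardGaussian

section L2Norm

variable {Ω F : Type*} [MeasurableSpace Ω] [NormedAddCommGroup F] {μ : Measure Ω} {f : Ω → F}
  {c : ℝ}

lemma eLpNorm_two_eq_ofReal_sqrt (hf : MemLp f 2 μ) :
    eLpNorm f 2 μ = ENNReal.ofReal (√(∫ ω, ‖f ω‖ ^ 2 ∂μ)) := by
  rw [hf.eLpNorm_eq_integral_rpow_norm two_ne_zero ENNReal.ofNat_ne_top, sqrt_eq_rpow]
  norm_num

lemma integral_norm_sq_le_of_eLpNorm_two_le (hf : AEStronglyMeasurable f μ) (hc : 0 ≤ c)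
    (h : eLpNorm f 2 μ ≤ ENNReal.ofReal c) : ∫ ω, ‖f ω‖ ^ 2 ∂μ ≤ c ^ 2 := by
  have hf_memLp : MemLp f 2 μ := ⟨hf, h.trans_lt ENNReal.ofReal_lt_top⟩
  rw [eLpNorm_two_eq_ofReal_sqrt hf_memLp, ENNReal.ofReal_le_ofReal_iff hc] at h
  exact (sqrt_le_left hc).1 h

lemma eLpNorm_two_le_of_integral_norm_sq_le (hf : MemLp f 2 μ) (hc : 0 ≤ c)
    (h : ∫ ω, ‖f ω‖ ^ 2 ∂μ ≤ c ^ 2) : eLpNorm f 2 μ ≤ ENNReal.ofReal c := by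
  rw [eLpNorm_two_eq_ofReal_sqrt hf]
  exact ENNReal.ofReal_le_ofReal ((sqrt_le_left hc).2 h)

lemma eLpNorm_le_ofReal_of_ae_norm_le [IsProbabilityMeasure μ] {p : ℝ≥0∞}
    (h : ∀ᵐ ω ∂μ, ‖f ω‖ ≤ c) : eLpNorm f p μ ≤ ENNReal.ofReal c := by
  simpa using eLpNorm_le_of_ae_bound (p := p) h

lemma nonneg_of_ae_norm_le [NeZero μ] (h : ∀ᵐ ω ∂μ, ‖f ω‖ ≤ c) : 0 ≤ c :=
  h.exists.elim fun _ hω => (norm_nonneg _).trans hω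

lemma eLpNorm_add_le_ofReal {p : ℝ≥0∞} (hp : 1 ≤ p) {g : Ω → F} {a b : ℝ}
    (hf : AEStronglyMeasurable f μ) (hg : AEStronglyMeasurable g μ) (ha : 0 ≤ a) (hb : 0 ≤ b)
    (hfa : eLpNorm f p μ ≤ ENNReal.ofReal a) (hgb : eLpNorm g p μ ≤ ENNReal.ofReal b) :
    eLpNorm (fun ω => f ω + g ω) p μ ≤ ENNReal.ofReal (a + b) := by
  rw [ENNReal.ofReal_add ha hb]
  exact (eLpNorm_add_le hf hg hp).trans (add_le_add hfa hgb)

lemma eLpNorm_smul_le_ofReal [NormedSpace ℝ F] {p : ℝ≥0∞} {a b : ℝ} (r : ℝ) (hr : |r| ≤ a)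
    (hfb : eLpNorm f p μ ≤ ENNReal.ofReal b) :
    eLpNorm (fun ω => r • f ω) p μ ≤ ENNReal.ofReal (a * b) := by
  rw [ENNReal.ofReal_mul ((abs_nonneg r).trans hr)]
  refine (eLpNorm_const_smul r f p μ).le.trans (mul_le_mul' ?_ hfb)
  rw [← ofReal_norm, norm_eq_abs]
  exact ENNReal.ofReal_le_ofReal hr

lemma eLpNorm_const_add_mul_norm_le [IsProbabilityMeasure μ] {p : ℝ≥0∞} (hp : 1 ≤ p) {a b : ℝ}
    (hf : AEStronglyMeasurable f μ) (ha : 0 ≤ a) (hb : 0 ≤ b) (hc : 0 ≤ c)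
    (hfc : eLpNorm f p μ ≤ ENNReal.ofReal c) :
    eLpNorm (fun ω => a + b * ‖f ω‖) p μ ≤ ENNReal.ofReal (a + b * c) := by
  have constant : eLpNorm (fun _ : Ω => a) p μ ≤ ENNReal.ofReal a :=
    eLpNorm_le_ofReal_of_ae_norm_le (ae_of_all _ fun _ => (norm_of_nonneg ha).le)
  have scaled := eLpNorm_smul_le_ofReal b (abs_of_nonneg hb).le ((eLpNorm_norm f).le.trans hfc)
  exact eLpNorm_add_le_ofReal hp (by fun_prop) (hf.norm.const_smul b) ha (by positivity)
    constant scaled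

lemma memLp_of_lipschitzWith [MeasurableSpace F] {μ : Measure F} [IsFiniteMeasure μ]
    {f : F → F} {K : ℝ≥0} {p : ℝ≥0∞} (hf : LipschitzWith K f) (hμ : MemLp id p μ) :
    MemLp f p μ := by
  have lipschitz : LipschitzWith K fun x => f x - f 0 := by simpa using hf.sub (.const (f 0))
  have centred := lipschitz.comp_memLp (sub_self _) hμ
  exact (centred.add (memLp_const (f 0))).ae_eq (ae_of_all _ fun x => sub_add_cancel (f x) (f 0))

end L2Norm

section GaussianMixture

variable [FiniteDimensional ℝ E] [MeasurableSpace E] [BorelSpace E] {P : Measure E} {R : ℝ}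

/-- The law of `a • X + b • Z`, where `X` has law `P` and `Z` is an independent standard Gaussian.
The Ornstein–Uhlenbeck marginals are of this form, and so are the observations `l • X + Z` of the
Gaussian channel. -/
def gaussianMix (P : Measure E) (a b : ℝ) : Measure E :=
  P.map (a • ·) ∗ (stdGaussian E).map (b • ·)

instance [IsProbabilityMeasure P] (a b : ℝ) : IsProbabilityMeasure (gaussianMix P a b) := by
  have : IsProbabilityMeasure (P.map (a • ·)) := Measure.isProbabilityMeasure_map (by fun_prop)
  have : IsProbabilityMeasure ((stdGaussian E).map (b • ·)) :=
    Measure.isProbabilityMeasure_map (by fun_prop)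
  unfold gaussianMix
  infer_instance

lemma gaussianMix_eq_map_prod [SFinite P] (a b : ℝ) :
    gaussianMix P a b = (P.prod (stdGaussian E)).map fun p => a • p.1 + b • p.2 := by
  rw [gaussianMix, Measure.conv, Measure.map_prod_map _ _ (by fun_prop) (by fun_prop),
    Measure.map_map (by fun_prop) (by fun_prop)]
  rfl

lemma gaussianMix_map_smul [SFinite P] (a b c : ℝ) :
    (gaussianMix P a b).map (c • ·) = gaussianMix P (c * a) (c * b) := by
  rw [gaussianMix_eq_map_prod, gaussianMix_eq_map_prod,
    Measure.map_map (by fun_prop) (by fun_prop)]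
  congr 1
  ext p
  simp only [Function.comp_apply, smul_add, smul_smul]

lemma gaussianMix_conv_stdGaussian [SFinite P] {a b c b' : ℝ} (h : b' ^ 2 = b ^ 2 + c ^ 2) :
    gaussianMix P a b ∗ (stdGaussian E).map (c • ·) = gaussianMix P a b' := by
  rw [gaussianMix, Measure.conv_assoc, map_smul_stdGaussian_conv h, gaussianMix]

lemma eLpNorm_id_stdGaussian_le :
    eLpNorm id 2 (stdGaussian E) ≤ ENNReal.ofReal √(Module.finrank ℝ E) :=
  eLpNorm_two_le_of_integral_norm_sq_le IsGaussian.memLp_two_id (sqrt_nonneg _) <| by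
    simp only [id_eq, integral_norm_sq_stdGaussian, sq_sqrt (Nat.cast_nonneg _), le_refl]

lemma eLpNorm_id_gaussianMix_le [IsProbabilityMeasure P] (hP : ∀ᵐ x ∂P, ‖x‖ ≤ R) {a b A B : ℝ}
    (ha : |a| ≤ A) (hb : |b| ≤ B) :
    eLpNorm id 2 (gaussianMix P a b) ≤ ENNReal.ofReal (A * R + B * √(Module.finrank ℝ E)) := by
  have hR : 0 ≤ R := nonneg_of_ae_norm_le hP
  have hA : 0 ≤ A := (abs_nonneg a).trans ha
  have hB : 0 ≤ B := (abs_nonneg b).trans hb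
  have signal : eLpNorm (fun p : E × E => p.1) 2 (P.prod (stdGaussian E)) ≤ ENNReal.ofReal R :=
    (eLpNorm_comp_measurePreserving (g := id) (by fun_prop) measurePreserving_fst).le.trans
      (eLpNorm_le_ofReal_of_ae_norm_le hP)
  have noise : eLpNorm (fun p : E × E => p.2) 2 (P.prod (stdGaussian E)) ≤
      ENNReal.ofReal √(Module.finrank ℝ E) :=
    (eLpNorm_comp_measurePreserving (g := id) (by fun_prop) measurePreserving_snd).le.trans
      eLpNorm_id_stdGaussian_le
  rw [gaussianMix_eq_map_prod, eLpNorm_map_measure (by fun_prop) (by fun_prop), Function.id_comp]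
  have scaled_signal := eLpNorm_smul_le_ofReal a ha signal
  have scaled_noise := eLpNorm_smul_le_ofReal b hb noise
  exact eLpNorm_add_le_ofReal one_le_two (by fun_prop) (by fun_prop) (by positivity) (by positivity)
    scaled_signal scaled_noise

end GaussianMixture

section Posterior

variable {l : ℝ}

/-- Log-likelihood ratio of the observation `y` of the Gaussian channel `l • x + Z`, relative to
pure noise `Z`. -/
def gaussLogLik (l : ℝ) (y x : E) : ℝ := l * ⟪y, x⟫_ℝ - l ^ 2 * ‖x‖ ^ 2 / 2

@[fun_prop]
lemma continuous_gaussLogLik (y : E) : Continuous (gaussLogLik l y) := by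
  unfold gaussLogLik; fun_prop

lemma gaussLogLik_le (y x : E) : gaussLogLik l y x ≤ ‖y‖ ^ 2 / 2 := by
  have complete_square : gaussLogLik l y x = ‖y‖ ^ 2 / 2 - ‖y - l • x‖ ^ 2 / 2 := by
    rw [gaussLogLik, norm_sub_sq_real, real_inner_smul_right, norm_smul, norm_eq_abs, mul_pow,
      sq_abs]
    ring
  rw [complete_square]
  linarith [sq_nonneg ‖y - l • x‖]

lemma abs_gaussLogLik_oscillation_sub_le {l' R : ℝ} {x x' : E} (hx : ‖x‖ ≤ R) (hx' : ‖x'‖ ≤ R)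
    (y y' : E) :
    |(gaussLogLik l' y' x - gaussLogLik l' y' x') - (gaussLogLik l y x - gaussLogLik l y x')| ≤
      2 * R * ‖l' • y' - l • y‖ + |l' ^ 2 - l ^ 2| * R ^ 2 / 2 := by
  have split : (gaussLogLik l' y' x - gaussLogLik l' y' x') -
      (gaussLogLik l y x - gaussLogLik l y x') =
      ⟪l' • y' - l • y, x - x'⟫_ℝ - (l' ^ 2 - l ^ 2) * ((‖x‖ ^ 2 - ‖x'‖ ^ 2) / 2) := by
    simp only [gaussLogLik, inner_sub_left, inner_sub_right, real_inner_smul_left]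
    ring
  have inner_bound : |⟪l' • y' - l • y, x - x'⟫_ℝ| ≤ 2 * R * ‖l' • y' - l • y‖ := by
    refine (abs_real_inner_le_norm _ _).trans ?_
    nlinarith [norm_sub_le x x', norm_nonneg (l' • y' - l • y)]
  have norm_sq_bound : |(‖x‖ ^ 2 - ‖x'‖ ^ 2) / 2| ≤ R ^ 2 / 2 := by
    rw [abs_le]
    constructor <;> nlinarith [norm_nonneg x, norm_nonneg x']
  calc _ ≤ |⟪l' • y' - l • y, x - x'⟫_ℝ| + |l' ^ 2 - l ^ 2| * |(‖x‖ ^ 2 - ‖x'‖ ^ 2) / 2| := by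
        rw [split, ← abs_mul]; exact abs_sub _ _
    _ ≤ 2 * R * ‖l' • y' - l • y‖ + |l' ^ 2 - l ^ 2| * (R ^ 2 / 2) := by gcongr
    _ = _ := by ring

variable [MeasurableSpace E] [BorelSpace E] {P : Measure E}

lemma integrable_exp_gaussLogLik [IsFiniteMeasure P] (y : E) :
    Integrable (fun x => exp (gaussLogLik l y x)) P :=
  Integrable.of_bound (by fun_prop) (exp (‖y‖ ^ 2 / 2)) <| ae_of_all _ fun x => by
    rw [norm_of_nonneg (exp_pos _).le]
    exact exp_le_exp.2 (gaussLogLik_le y x)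

/-- The likelihood of the observation `y` of `l • X + Z` relative to pure noise, where `X` has law
`P`: the density of `gaussianMix P l 1` with respect to the standard Gaussian. -/
def gaussEvidence (P : Measure E) (l : ℝ) (y : E) : ℝ := ∫ x, exp (gaussLogLik l y x) ∂P

lemma gaussEvidence_pos [IsProbabilityMeasure P] (y : E) : 0 < gaussEvidence P l y :=
  integral_exp_pos (integrable_exp_gaussLogLik y)

variable [FiniteDimensional ℝ E]

@[fun_prop]
lemma measurable_gaussLogLik : Measurable fun p : E × E => gaussLogLik l p.1 p.2 := by
  unfold gaussLogLik; fun_prop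

@[fun_prop]
lemma measurable_gaussEvidence [SFinite P] : Measurable (gaussEvidence P l) := by
  unfold gaussEvidence
  exact (StronglyMeasurable.integral_prod_right
    (f := fun y x => exp (gaussLogLik l y x)) (by fun_prop)).measurable

/-- The conditional law of `X` given `l • X + Z = y`, as a kernel in `y`. -/
def gaussPosterior (P : Measure E) [SFinite P] (l : ℝ) : Kernel E E :=
  (Kernel.const E P).withDensity fun y x =>
    ENNReal.ofReal (exp (gaussLogLik l y x) / gaussEvidence P l y)

lemma gaussPosterior_apply [SFinite P] (y : E) :
    gaussPosterior P l y = P.tilted (gaussLogLik l y) := by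
  rw [gaussPosterior, Kernel.withDensity_apply _ (by fun_prop), Kernel.const_apply]
  rfl

instance [IsProbabilityMeasure P] : IsMarkovKernel (gaussPosterior P l) where
  isProbabilityMeasure y := by
    rw [gaussPosterior_apply]
    exact isProbabilityMeasure_tilted (integrable_exp_gaussLogLik y)

instance [SFinite P] : IsSFiniteKernel (gaussPosterior P l) :=
  Kernel.IsSFiniteKernel.withDensity _ fun _ _ => ENNReal.ofReal_ne_top

lemma ae_gaussPosterior_of_ae [SFinite P] {p : E → Prop} (h : ∀ᵐ x ∂P, p x) (y : E) :
    ∀ᵐ x ∂gaussPosterior P l y, p x := by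
  rw [gaussPosterior_apply]
  exact (tilted_absolutelyContinuous P _).ae_le h

/-- The posterior mean, or denoiser, `𝔼[X | l • X + Z = y]`. -/
def posteriorMean (P : Measure E) [SFinite P] (l : ℝ) (y : E) : E := ∫ x, x ∂gaussPosterior P l y

@[fun_prop]
lemma measurable_posteriorMean [SFinite P] : Measurable (posteriorMean P l) :=
  (StronglyMeasurable.integral_kernel_prod_right' (κ := gaussPosterior P l)
    (f := fun p : E × E => p.2) (by fun_prop)).measurable

lemma norm_posteriorMean_le [IsProbabilityMeasure P] {R : ℝ} (hP : ∀ᵐ x ∂P, ‖x‖ ≤ R) (y : E) :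
    ‖posteriorMean P l y‖ ≤ R := by
  simpa [posteriorMean] using
    norm_integral_le_of_norm_le_const (ae_gaussPosterior_of_ae (l := l) hP y)

lemma lintegral_gaussianChannel [IsProbabilityMeasure P] {g : E × E → ℝ≥0∞} (hg : Measurable g) :
    ∫⁻ p, g (l • p.1 + p.2, p.1) ∂P.prod (stdGaussian E) =
      ∫⁻ y, ∫⁻ x, ENNReal.ofReal (exp (gaussLogLik l y x)) * g (y, x) ∂P ∂stdGaussian E := by
  rw [lintegral_prod _ (by fun_prop)]
  conv_rhs => rw [lintegral_lintegral_swap (by fun_prop)]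
  refine lintegral_congr fun x => ?_
  rw [lintegral_add_left_stdGaussian (l • x) (g := fun y => g (y, x)) (by fun_prop)]
  refine lintegral_congr fun y => ?_
  rw [gaussLogLik, real_inner_smul_right, norm_smul, norm_eq_abs, mul_pow, sq_abs]

lemma gaussianMix_one_eq_withDensity [IsProbabilityMeasure P] :
    gaussianMix P l 1 =
      (stdGaussian E).withDensity fun y => ENNReal.ofReal (gaussEvidence P l y) := by
  refine Measure.ext_of_lintegral _ fun g hg => ?_
  rw [gaussianMix_eq_map_prod, lintegral_map hg (by fun_prop),
    lintegral_withDensity_eq_lintegral_mul _ (by fun_prop) hg]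
  simp only [one_smul]
  rw [lintegral_gaussianChannel (g := fun p => g p.1) (by fun_prop)]
  refine lintegral_congr fun y => ?_
  rw [lintegral_mul_const (g y) (by fun_prop), Pi.mul_apply, gaussEvidence,
    ofReal_integral_eq_lintegral_ofReal (integrable_exp_gaussLogLik y)
      (ae_of_all _ fun _ => (exp_pos _).le)]

lemma gaussianMix_compProd_gaussPosterior [IsProbabilityMeasure P] :
    gaussianMix P l 1 ⊗ₘ gaussPosterior P l =
      (P.prod (stdGaussian E)).map fun p => (l • p.1 + p.2, p.1) := by
  refine Measure.ext_of_lintegral _ fun g hg => ?_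
  rw [lintegral_map hg (by fun_prop), lintegral_gaussianChannel hg, Measure.lintegral_compProd hg,
    gaussianMix_one_eq_withDensity, lintegral_withDensity_eq_lintegral_mul _ (by fun_prop)
      (hg.lintegral_kernel_prod_right' (κ := gaussPosterior P l))]
  refine lintegral_congr fun y => ?_
  rw [Pi.mul_apply, gaussPosterior_apply, lintegral_tilted, ← lintegral_const_mul _ (by fun_prop)]
  refine lintegral_congr fun x => ?_
  rw [← mul_assoc, ← ENNReal.ofReal_mul (gaussEvidence_pos y).le]
  congr 2
  exact mul_div_cancel₀ _ (gaussEvidence_pos y).ne'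

lemma map_compProd_comap {Ω α β : Type*} [MeasurableSpace Ω] [MeasurableSpace α]
    [MeasurableSpace β] {μ : Measure Ω} [SFinite μ] {κ : Kernel α β} [IsSFiniteKernel κ]
    {Y : Ω → α} (hY : Measurable Y) :
    (μ ⊗ₘ κ.comap Y hY).map (fun p => (Y p.1, p.2)) = μ.map Y ⊗ₘ κ := by
  refine Measure.ext_of_lintegral _ fun g hg => ?_
  rw [lintegral_map hg (by fun_prop), Measure.lintegral_compProd (by fun_prop),
    Measure.lintegral_compProd hg, lintegral_map hg.lintegral_kernel_prod_right' hY]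
  rfl

lemma map_add_smul_compProd_gaussPosterior [IsProbabilityMeasure P] {Ω : Type*}
    [MeasurableSpace Ω] {μ : Measure Ω} [SFinite μ] {Y : Ω → E} (hY : Measurable Y)
    (h : μ.map Y = gaussianMix P l 1) (η : ℝ) :
    (μ ⊗ₘ (gaussPosterior P l).comap Y hY).map (fun p => Y p.1 + η • p.2) =
      gaussianMix P (l + η) 1 := by
  have factor : (fun p : Ω × E => Y p.1 + η • p.2) =
      (fun p : E × E => p.1 + η • p.2) ∘ fun p => (Y p.1, p.2) := rfl
  rw [factor, ← Measure.map_map (by fun_prop) (by fun_prop), map_compProd_comap, h,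
    gaussianMix_compProd_gaussPosterior, Measure.map_map (by fun_prop) (by fun_prop),
    gaussianMix_eq_map_prod]
  congr 1
  ext p
  simp only [Function.comp_apply, add_smul, one_smul]
  abel

end Posterior

section TiltedComparison

lemma abs_exp_sub_exp_le (a b : ℝ) : |exp a - exp b| ≤ |a - b| * (exp a + exp b) := by
  wlog hab : b ≤ a generalizing a b
  · rw [abs_sub_comm, abs_sub_comm a, add_comm]
    exact this b a (le_of_not_ge hab)
  have tangent : exp a * (b - a + 1) ≤ exp b := by
    calc exp a * (b - a + 1) ≤ exp a * exp (b - a) := by gcongr; exact add_one_le_exp _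
      _ = exp b := by rw [← exp_add, add_sub_cancel]
  rw [abs_of_nonneg (sub_nonneg.2 (exp_le_exp.2 hab)), abs_of_nonneg (sub_nonneg.2 hab)]
  nlinarith [mul_nonneg (sub_nonneg.2 hab) (exp_pos b).le]

variable {α F : Type*} [MeasurableSpace α] [NormedAddCommGroup F] [NormedSpace ℝ F]
  {μ : Measure α} {f g : α → ℝ} {φ : α → F}

lemma integral_exp_smul_eq [NeZero μ] (hf : Integrable (fun x => exp (f x)) μ) :
    ∫ x, exp (f x) • φ x ∂μ = (∫ x, exp (f x) ∂μ) • ∫ x, φ x ∂μ.tilted f := by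
  rw [integral_tilted, ← integral_smul]
  refine integral_congr_ae (ae_of_all _ fun x => ?_)
  simp only [smul_smul]
  rw [mul_div_cancel₀ _ (integral_exp_pos hf).ne']

lemma integrable_prod_exp_smul_sub [SFinite μ]
    (hf : Integrable (fun x => exp (f x)) μ) (hg : Integrable (fun x => exp (g x)) μ)
    (hφf : Integrable φ (μ.tilted f)) (hφg : Integrable φ (μ.tilted g)) :
    Integrable (fun p => exp (f p.1 + g p.2) • (φ p.1 - φ p.2)) (μ.prod μ) := by
  rw [integrable_tilted_iff hf] at hφf
  rw [integrable_tilted_iff hg] at hφg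
  refine ((hg.smul_prod hφf).swap.sub (hf.smul_prod hφg)).congr (ae_of_all _ fun p => ?_)
  simp only [Pi.sub_apply, Function.comp_apply, Prod.fst_swap, Prod.snd_swap, exp_add, smul_smul,
    smul_sub, mul_comm]

lemma integral_prod_exp_smul_sub [SFinite μ] [NeZero μ]
    (hf : Integrable (fun x => exp (f x)) μ) (hg : Integrable (fun x => exp (g x)) μ)
    (hφf : Integrable φ (μ.tilted f)) (hφg : Integrable φ (μ.tilted g)) :
    ∫ p, exp (f p.1 + g p.2) • (φ p.1 - φ p.2) ∂μ.prod μ =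
      ((∫ x, exp (f x) ∂μ) * ∫ x, exp (g x) ∂μ) •
        (∫ x, φ x ∂μ.tilted f - ∫ x, φ x ∂μ.tilted g) := by
  have first_integrable : Integrable (fun p => exp (g p.2) • (exp (f p.1) • φ p.1)) (μ.prod μ) :=
    (hg.smul_prod ((integrable_tilted_iff hf φ).1 hφf)).swap
  have second_integrable := hf.smul_prod ((integrable_tilted_iff hg φ).1 hφg)
  have first : ∫ p, exp (g p.2) • (exp (f p.1) • φ p.1) ∂μ.prod μ =
      (∫ x, exp (g x) ∂μ) • ((∫ x, exp (f x) ∂μ) • ∫ x, φ x ∂μ.tilted f) := by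
    rw [← integral_exp_smul_eq hf, ← integral_prod_smul, ← integral_prod_swap]
    simp only [Prod.fst_swap, Prod.snd_swap]
  have second : ∫ p, exp (f p.1) • (exp (g p.2) • φ p.2) ∂μ.prod μ =
      (∫ x, exp (f x) ∂μ) • ((∫ x, exp (g x) ∂μ) • ∫ x, φ x ∂μ.tilted g) := by
    rw [← integral_exp_smul_eq hg, ← integral_prod_smul]
  rw [smul_sub, ← smul_smul _ _ (∫ x, φ x ∂μ.tilted g), ← second, mul_comm, ← smul_smul, ← first,
    ← integral_sub first_integrable second_integrable]
  refine integral_congr_ae (ae_of_all _ fun p => ?_)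
  simp only [exp_add, smul_smul, smul_sub, mul_comm]

lemma two_mul_smul_integral_tilted_sub [SFinite μ] [NeZero μ]
    (hf : Integrable (fun x => exp (f x)) μ) (hg : Integrable (fun x => exp (g x)) μ)
    (hφf : Integrable φ (μ.tilted f)) (hφg : Integrable φ (μ.tilted g)) :
    (2 * ((∫ x, exp (f x) ∂μ) * ∫ x, exp (g x) ∂μ)) •
        (∫ x, φ x ∂μ.tilted f - ∫ x, φ x ∂μ.tilted g) =
      ∫ p, (exp (f p.1 + g p.2) - exp (f p.2 + g p.1)) • (φ p.1 - φ p.2) ∂μ.prod μ := by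
  have doubled_integrable := integrable_prod_exp_smul_sub hf hg hφf hφg
  have swapped_integrable :
      Integrable (fun p => exp (f p.2 + g p.1) • (φ p.2 - φ p.1)) (μ.prod μ) :=
    doubled_integrable.swap
  have swapped : ∫ p, exp (f p.2 + g p.1) • (φ p.2 - φ p.1) ∂μ.prod μ =
      ∫ p, exp (f p.1 + g p.2) • (φ p.1 - φ p.2) ∂μ.prod μ :=
    integral_prod_swap fun p : α × α => exp (f p.1 + g p.2) • (φ p.1 - φ p.2)
  rw [two_mul, add_smul, ← integral_prod_exp_smul_sub hf hg hφf hφg]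
  nth_rw 2 [← swapped]
  rw [← integral_add doubled_integrable swapped_integrable]
  refine integral_congr_ae (ae_of_all _ fun p => ?_)
  simp only [sub_smul, smul_sub]
  abel

-- Doubling the variable makes the difference of the two means a single integral in which only the
-- oscillations of `f - g` and `φ` enter; bounding `f - g` itself would lose the normalisations.
theorem norm_integral_tilted_sub_le [SFinite μ] [NeZero μ]
    (hf : Integrable (fun x => exp (f x)) μ) (hg : Integrable (fun x => exp (g x)) μ)
    (hφf : Integrable φ (μ.tilted f)) (hφg : Integrable φ (μ.tilted g)) {b : ℝ}
    (hb : ∀ᵐ p ∂μ.prod μ, |(f p.1 - f p.2) - (g p.1 - g p.2)| * ‖φ p.1 - φ p.2‖ ≤ b) :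
    ‖∫ x, φ x ∂μ.tilted f - ∫ x, φ x ∂μ.tilted g‖ ≤ b := by
  set Z := (∫ x, exp (f x) ∂μ) * ∫ x, exp (g x) ∂μ with hZ
  have Z_pos : 0 < Z := mul_pos (integral_exp_pos hf) (integral_exp_pos hg)
  have weight_integrable : Integrable (fun p : α × α => exp (f p.1 + g p.2)) (μ.prod μ) := by
    simpa only [exp_add] using hf.mul_prod hg
  have swapped_integrable : Integrable (fun p : α × α => exp (f p.2 + g p.1)) (μ.prod μ) :=
    weight_integrable.swap
  have weight_integral : ∫ p, exp (f p.1 + g p.2) ∂μ.prod μ = Z := by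
    simp only [exp_add, integral_prod_mul (fun x => exp (f x)) (fun x => exp (g x)), hZ]
  have swapped_integral : ∫ p, exp (f p.2 + g p.1) ∂μ.prod μ = Z :=
    (integral_prod_swap fun p : α × α => exp (f p.1 + g p.2)).trans weight_integral
  have pointwise : ∀ᵐ p ∂μ.prod μ,
      ‖(exp (f p.1 + g p.2) - exp (f p.2 + g p.1)) • (φ p.1 - φ p.2)‖ ≤
        b * (exp (f p.1 + g p.2) + exp (f p.2 + g p.1)) := by
    filter_upwards [hb] with p hp
    rw [norm_smul, norm_eq_abs]
    calc _ ≤ |(f p.1 + g p.2) - (f p.2 + g p.1)| *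
          (exp (f p.1 + g p.2) + exp (f p.2 + g p.1)) * ‖φ p.1 - φ p.2‖ := by
          gcongr; exact abs_exp_sub_exp_le _ _
      _ = |(f p.1 - f p.2) - (g p.1 - g p.2)| * ‖φ p.1 - φ p.2‖ *
          (exp (f p.1 + g p.2) + exp (f p.2 + g p.1)) := by
          rw [show f p.1 + g p.2 - (f p.2 + g p.1) = f p.1 - f p.2 - (g p.1 - g p.2) by ring]
          ring
      _ ≤ _ := by gcongr
  have bound := norm_integral_le_of_norm_le
    ((weight_integrable.add swapped_integrable).const_mul b) pointwise
  rw [← two_mul_smul_integral_tilted_sub hf hg hφf hφg, norm_smul, norm_of_nonneg (by positivity),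
    integral_const_mul, integral_add' weight_integrable swapped_integrable, weight_integral,
    swapped_integral] at bound
  nlinarith

end TiltedComparison

section PosteriorMean

variable [FiniteDimensional ℝ E] [MeasurableSpace E] [BorelSpace E] {P : Measure E}
  [IsProbabilityMeasure P] {R l l' s : ℝ}

lemma integrable_id_gaussPosterior (hP : ∀ᵐ x ∂P, ‖x‖ ≤ R) (y : E) :
    Integrable id (gaussPosterior P l y) :=
  Integrable.of_bound (by fun_prop) R (ae_gaussPosterior_of_ae hP y)

lemma norm_posteriorMean_sub_le (hP : ∀ᵐ x ∂P, ‖x‖ ≤ R) (y y' : E) :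
    ‖posteriorMean P l' y' - posteriorMean P l y‖ ≤
      4 * R ^ 2 * ‖l' • y' - l • y‖ + |l' ^ 2 - l ^ 2| * R ^ 3 := by
  have hR : 0 ≤ R := nonneg_of_ae_norm_le hP
  simp only [posteriorMean, gaussPosterior_apply]
  refine norm_integral_tilted_sub_le (φ := id) (integrable_exp_gaussLogLik y')
    (integrable_exp_gaussLogLik y) ?_ ?_ ?_
  · simpa only [gaussPosterior_apply] using integrable_id_gaussPosterior (l := l') hP y'
  · simpa only [gaussPosterior_apply] using integrable_id_gaussPosterior (l := l) hP y
  filter_upwards [Measure.quasiMeasurePreserving_fst.ae hP,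
    Measure.quasiMeasurePreserving_snd.ae hP] with p hp₁ hp₂
  calc _ ≤ (2 * R * ‖l' • y' - l • y‖ + |l' ^ 2 - l ^ 2| * R ^ 2 / 2) * (2 * R) := by
        gcongr
        · exact abs_gaussLogLik_oscillation_sub_le hp₁ hp₂ y y'
        · exact (norm_sub_le _ _).trans (by simp only [id_eq]; linarith)
    _ = _ := by ring

lemma norm_posteriorMean_sub_le_of_norm_sub_le (hP : ∀ᵐ x ∂P, ‖x‖ ≤ R) (hl : 0 ≤ l) (hs : 0 ≤ s)
    (hl' : l + s ≤ l') {y y' : E} (hy : ‖y' - y‖ ≤ s * R) :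
    ‖posteriorMean P (l + s) y' - posteriorMean P l y‖ ≤
      s * (6 * l' * R ^ 3 + 4 * R ^ 2 * ‖y‖) := by
  have hR : 0 ≤ R := nonneg_of_ae_norm_le hP
  have hl'_nonneg : 0 ≤ l' := by linarith
  have signal : ‖(l + s) • y' - l • y‖ ≤ l' * (s * R) + s * ‖y‖ := by
    calc ‖(l + s) • y' - l • y‖ = ‖(l + s) • (y' - y) + s • y‖ := by congr 1; module
      _ ≤ (l + s) * ‖y' - y‖ + s * ‖y‖ := by
        refine (norm_add_le _ _).trans_eq ?_
        rw [norm_smul, norm_smul, norm_of_nonneg hs, norm_of_nonneg (by positivity)]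
      _ ≤ _ := by gcongr
  have snr : |(l + s) ^ 2 - l ^ 2| ≤ 2 * l' * s := by
    rw [abs_of_nonneg (by nlinarith)]
    nlinarith
  calc _ ≤ 4 * R ^ 2 * ‖(l + s) • y' - l • y‖ + |(l + s) ^ 2 - l ^ 2| * R ^ 3 :=
        norm_posteriorMean_sub_le hP y y'
    _ ≤ 4 * R ^ 2 * (l' * (s * R) + s * ‖y‖) + 2 * l' * s * R ^ 3 := by gcongr
    _ = _ := by ring

end PosteriorMean

section Resampling

variable [FiniteDimensional ℝ E] [MeasurableSpace E] {P : Measure E} {R l η : ℝ} {Ω : Type*}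
  [MeasurableSpace Ω] {μ : Measure Ω} {Y : Ω → E}

/-- `ν` is the joint law of `ω`, of law `μ`, and of an observation at the level `l + s` which is
within `s * R` of the observation `Y ω` at the level `l`, and which the drift of the denoiser,
`Y + s • 𝔼[X | Y]`, predicts with an `L²` error at most `c`. -/
structure IsAdvance (P : Measure E) [SFinite P] (R l : ℝ) (μ : Measure Ω) (Y : Ω → E) (s c : ℝ)
    (ν : Measure (Ω × E)) : Prop where
  map_fst : ν.map Prod.fst = μ
  map_snd : ν.map Prod.snd = gaussianMix P (l + s) 1
  norm_sub_le : ∀ᵐ p ∂ν, ‖p.2 - Y p.1‖ ≤ s * R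
  eLpNorm_sub_le : eLpNorm (fun p => p.2 - Y p.1 - s • posteriorMean P l (Y p.1)) 2 ν ≤
    ENNReal.ofReal c

variable [IsProbabilityMeasure P]

lemma IsAdvance.isProbabilityMeasure [IsProbabilityMeasure μ] {s c : ℝ} {ν : Measure (Ω × E)}
    (h : IsAdvance P R l μ Y s c ν) : IsProbabilityMeasure ν :=
  (Measure.isProbabilityMeasure_map_iff measurable_fst.aemeasurable).1
    (h.map_fst.symm ▸ inferInstance)

lemma IsAdvance.mono {s c c' : ℝ} {ν : Measure (Ω × E)} (h : IsAdvance P R l μ Y s c ν)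
    (hc : c ≤ c') : IsAdvance P R l μ Y s c' ν :=
  { h with eLpNorm_sub_le := h.eLpNorm_sub_le.trans (ENNReal.ofReal_le_ofReal hc) }

variable [BorelSpace E]

lemma integral_norm_sq_add_smul_sub_integral_le {ν : Measure E} [IsProbabilityMeasure ν]
    (hν : ∀ᵐ x ∂ν, ‖x‖ ≤ R) (v : E) (η : ℝ) :
    ∫ x, ‖v + η • (x - ∫ x', x' ∂ν)‖ ^ 2 ∂ν ≤ ‖v‖ ^ 2 + (η * R) ^ 2 := by
  set m := ∫ x, x ∂ν
  have id_integrable : Integrable (fun x => x) ν := Integrable.of_bound (by fun_prop) R hν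
  have inner_integrable (c : ℝ) (w : E) : Integrable (fun x => c * ⟪w, x⟫_ℝ) ν :=
    (id_integrable.const_inner w).const_mul c
  have affine_integrable (a c : ℝ) (w : E) : Integrable (fun x => a + c * ⟪w, x⟫_ℝ) ν :=
    (integrable_const a).add (inner_integrable c w)
  have expand (x : E) : ‖v + η • (x - m)‖ ^ 2 =
      ‖v - η • m‖ ^ 2 + 2 * η * ⟪v - η • m, x⟫_ℝ + (η * ‖x‖) ^ 2 := by
    rw [show v + η • (x - m) = (v - η • m) + η • x by module, norm_add_sq_real,
      real_inner_smul_right, norm_smul, mul_pow, norm_eq_abs, sq_abs]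
    ring
  have recentre : ‖v - η • m‖ ^ 2 + 2 * η * ⟪v - η • m, m⟫_ℝ = ‖v‖ ^ 2 - (η * ‖m‖) ^ 2 := by
    rw [norm_sub_sq_real, inner_sub_left, real_inner_smul_left, real_inner_smul_right,
      real_inner_self_eq_norm_sq, norm_smul, mul_pow, norm_eq_abs, sq_abs]
    ring
  calc ∫ x, ‖v + η • (x - m)‖ ^ 2 ∂ν
      ≤ ∫ x, (‖v - η • m‖ ^ 2 + 2 * η * ⟪v - η • m, x⟫_ℝ + (η * R) ^ 2) ∂ν := by
        refine integral_mono_of_nonneg (ae_of_all _ fun x => by positivity)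
          ((affine_integrable _ _ _).add (integrable_const _)) ?_
        filter_upwards [hν] with x hx
        simp only [expand, mul_pow]
        gcongr
    _ = ‖v‖ ^ 2 - (η * ‖m‖) ^ 2 + (η * R) ^ 2 := by
        rw [integral_add (affine_integrable _ _ _) (integrable_const _),
          integral_add (integrable_const _) (inner_integrable _ _), integral_const_mul,
          integral_inner id_integrable]
        simp only [integral_const, probReal_univ, one_smul]
        exact congrArg (· + (η * R) ^ 2) recentre
    _ ≤ _ := by nlinarith [sq_nonneg (η * ‖m‖)]

lemma eLpNorm_add_smul_sub_posteriorMean_le [IsProbabilityMeasure μ] (hP : ∀ᵐ x ∂P, ‖x‖ ≤ R)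
    (hY : Measurable Y) {f : Ω → E} (hf : Measurable f) {c : ℝ} (hc : 0 ≤ c)
    (hfc : eLpNorm f 2 μ ≤ ENNReal.ofReal c) (η : ℝ) :
    eLpNorm (fun p => f p.1 + η • (p.2 - posteriorMean P l (Y p.1))) 2
      (μ ⊗ₘ (gaussPosterior P l).comap Y hY) ≤ ENNReal.ofReal √(c ^ 2 + (η * R) ^ 2) := by
  set κ := (gaussPosterior P l).comap Y hY
  have f_memLp : MemLp f 2 μ := ⟨by fun_prop, hfc.trans_lt ENNReal.ofReal_lt_top⟩
  have lifted_memLp : MemLp (fun p : Ω × E => f p.1) 2 (μ ⊗ₘ κ) :=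
    f_memLp.comp_measurePreserving ⟨measurable_fst, Measure.fst_compProd μ κ⟩
  have innovation_bound : ∀ᵐ p ∂μ ⊗ₘ κ, ‖p.2 - posteriorMean P l (Y p.1)‖ ≤ R + R := by
    refine Measure.ae_compProd_of_ae_ae (measurableSet_le (by fun_prop) (by fun_prop))
      (ae_of_all _ fun ω => ?_)
    filter_upwards [ae_gaussPosterior_of_ae (l := l) hP (Y ω)] with x hx
    exact (norm_sub_le _ _).trans (add_le_add hx (norm_posteriorMean_le hP _))
  have innovation_memLp : MemLp (fun p => p.2 - posteriorMean P l (Y p.1)) 2 (μ ⊗ₘ κ) :=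
    MemLp.of_bound (by fun_prop) (R + R) innovation_bound
  have sum_memLp := lifted_memLp.add (innovation_memLp.const_smul η)
  refine eLpNorm_two_le_of_integral_norm_sq_le sum_memLp (sqrt_nonneg _) ?_
  rw [sq_sqrt (by positivity)]
  calc _ = ∫ ω, ∫ x, ‖f ω + η • (x - posteriorMean P l (Y ω))‖ ^ 2
        ∂gaussPosterior P l (Y ω) ∂μ :=
        Measure.integral_compProd (sum_memLp.integrable_norm_pow two_ne_zero)
    _ ≤ ∫ ω, (‖f ω‖ ^ 2 + (η * R) ^ 2) ∂μ := by
        refine integral_mono_of_nonneg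
          (ae_of_all _ fun ω => integral_nonneg fun x => by positivity)
          ((f_memLp.integrable_norm_pow two_ne_zero).add (integrable_const _))
          (ae_of_all _ fun ω => ?_)
        exact integral_norm_sq_add_smul_sub_integral_le
          (ae_gaussPosterior_of_ae hP (Y ω)) (f ω) η
    _ = ∫ ω, ‖f ω‖ ^ 2 ∂μ + (η * R) ^ 2 := by
        rw [integral_add (f_memLp.integrable_norm_pow two_ne_zero) (integrable_const _)]
        simp
    _ ≤ _ := by gcongr; exact integral_norm_sq_le_of_eLpNorm_two_le (by fun_prop) hc hfc

lemma IsAdvance.zero (hY : Measurable Y) (hlaw : μ.map Y = gaussianMix P l 1) :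
    IsAdvance P R l μ Y 0 0 (μ.map fun ω => (ω, Y ω)) where
  map_fst := by
    rw [Measure.map_map (by fun_prop) (by fun_prop)]
    exact Measure.map_id
  map_snd := by
    rw [Measure.map_map (by fun_prop) (by fun_prop), add_zero, ← hlaw]
    rfl
  norm_sub_le := by
    rw [ae_map_iff (by fun_prop) (measurableSet_le (by fun_prop) (by fun_prop))]
    simp
  eLpNorm_sub_le := by
    rw [eLpNorm_map_measure (by fun_prop) (by fun_prop)]
    simp [Function.comp_def]

lemma IsAdvance.eLpNorm_posteriorMean_sub_le [IsProbabilityMeasure μ] (hP : ∀ᵐ x ∂P, ‖x‖ ≤ R)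
    (hY : Measurable Y) (hlaw : μ.map Y = gaussianMix P l 1) {s c l' : ℝ} {ν : Measure (Ω × E)}
    (h : IsAdvance P R l μ Y s c ν) (hl : 0 ≤ l) (hs : 0 ≤ s) (hl' : l + s ≤ l') :
    eLpNorm (fun p => posteriorMean P (l + s) p.2 - posteriorMean P l (Y p.1)) 2 ν ≤
      ENNReal.ofReal (s * (10 * l' * R ^ 3 + 4 * R ^ 2 * √(Module.finrank ℝ E))) := by
  have hR : 0 ≤ R := nonneg_of_ae_norm_le hP
  have hl'_nonneg : 0 ≤ l' := by linarith
  have := h.isProbabilityMeasure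
  have observation : eLpNorm (fun p : Ω × E => Y p.1) 2 ν ≤
      ENNReal.ofReal (l * R + 1 * √(Module.finrank ℝ E)) := by
    have preserving : MeasurePreserving (fun p : Ω × E => Y p.1) ν (gaussianMix P l 1) :=
      MeasurePreserving.comp (g := Y) ⟨hY, hlaw⟩ ⟨measurable_fst, h.map_fst⟩
    exact (eLpNorm_comp_measurePreserving (g := id) (by fun_prop) preserving).le.trans
      (eLpNorm_id_gaussianMix_le hP (abs_of_nonneg hl).le abs_one.le)
  have pointwise : ∀ᵐ p ∂ν, ‖posteriorMean P (l + s) p.2 - posteriorMean P l (Y p.1)‖ ≤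
      ‖s • (6 * l' * R ^ 3 + 4 * R ^ 2 * ‖Y p.1‖)‖ := by
    filter_upwards [h.norm_sub_le] with p hp
    rw [norm_of_nonneg (by rw [smul_eq_mul]; positivity)]
    exact norm_posteriorMean_sub_le_of_norm_sub_le hP hl hs hl' hp
  have envelope := eLpNorm_smul_le_ofReal s (abs_of_nonneg hs).le <|
    eLpNorm_const_add_mul_norm_le one_le_two (hY.comp measurable_fst).aestronglyMeasurable
      (a := 6 * l' * R ^ 3) (b := 4 * R ^ 2) (by positivity) (by positivity) (by positivity)
      observation
  refine (eLpNorm_mono_ae pointwise).trans (envelope.trans (ENNReal.ofReal_le_ofReal ?_))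
  gcongr s * ?_
  have : l * R ^ 3 ≤ l' * R ^ 3 := by gcongr; linarith
  linarith

-- Drawing `x` from the posterior of the current observation `y` and moving to `y + η • x` raises
-- the level by `η`, because `l • X + Z + η • X = (l + η) • X + Z`.
lemma IsAdvance.exists_step [IsProbabilityMeasure μ] (hP : ∀ᵐ x ∂P, ‖x‖ ≤ R) (hY : Measurable Y)
    {s c d : ℝ} {ν : Measure (Ω × E)} (h : IsAdvance P R l μ Y s c ν) (hη : 0 ≤ η) (hc : 0 ≤ c)
    (hd : 0 ≤ d)
    (drift : eLpNorm (fun p => posteriorMean P (l + s) p.2 - posteriorMean P l (Y p.1)) 2 ν ≤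
      ENNReal.ofReal d) :
    ∃ ν', IsAdvance P R l μ Y (s + η) √((c + η * d) ^ 2 + (η * R) ^ 2) ν' := by
  have := h.isProbabilityMeasure
  set κ := (gaussPosterior P (l + s)).comap (Prod.snd : Ω × E → E) measurable_snd
  refine ⟨(ν ⊗ₘ κ).map fun p => (p.1.1, p.1.2 + η • p.2), ?_, ?_, ?_, ?_⟩
  · have factor : Prod.fst ∘ (fun p : (Ω × E) × E => (p.1.1, p.1.2 + η • p.2)) =
        Prod.fst ∘ Prod.fst := rfl
    rw [Measure.map_map (by fun_prop) (by fun_prop), factor,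
      ← Measure.map_map (by fun_prop) (by fun_prop)]
    exact (congrArg _ (Measure.fst_compProd ν κ)).trans h.map_fst
  · rw [Measure.map_map (by fun_prop) (by fun_prop), ← add_assoc]
    exact map_add_smul_compProd_gaussPosterior measurable_snd h.map_snd η
  · rw [ae_map_iff (by fun_prop) (measurableSet_le (by fun_prop) (by fun_prop))]
    refine Measure.ae_compProd_of_ae_ae (measurableSet_le (by fun_prop) (by fun_prop)) ?_
    filter_upwards [h.norm_sub_le] with p hp
    filter_upwards [ae_gaussPosterior_of_ae (l := l + s) hP p.2] with x hx
    calc ‖p.2 + η • x - Y p.1‖ = ‖(p.2 - Y p.1) + η • x‖ := by congr 1; abel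
      _ ≤ s * R + η * R := by
        refine (norm_add_le _ _).trans (add_le_add hp ?_)
        rw [norm_smul, norm_of_nonneg hη]
        gcongr
      _ = (s + η) * R := by ring
  · have predicted := eLpNorm_add_le_ofReal one_le_two (by fun_prop) (by fun_prop) hc
      (by positivity) h.eLpNorm_sub_le (eLpNorm_smul_le_ofReal η (abs_of_nonneg hη).le drift)
    rw [eLpNorm_map_measure (by fun_prop) (by fun_prop)]
    convert eLpNorm_add_smul_sub_posteriorMean_le (l := l + s) hP measurable_snd (by fun_prop)
      (by positivity) predicted η using 2
    ext p
    simp only [Function.comp_apply]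
    module

lemma sqrt_sq_add_sq_le_add_sqrt_succ_mul {a b c r : ℝ} (hab : 0 ≤ a + b) (hr : 0 ≤ r) (n : ℕ)
    (hc : c = √n * r) :
    √((a + c + b) ^ 2 + r ^ 2) ≤ a + b + √(n + 1 : ℝ) * r := by
  have := sq_sqrt (Nat.cast_nonneg (α := ℝ) n)
  have := sq_sqrt (by positivity : (0 : ℝ) ≤ n + 1)
  have sqrt_mono : √(n : ℝ) ≤ √(n + 1 : ℝ) := sqrt_le_sqrt (by linarith)
  rw [sqrt_le_left (by positivity), hc]
  nlinarith [mul_nonneg (mul_nonneg hab hr) (sub_nonneg.2 sqrt_mono)]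

theorem exists_isAdvance [IsProbabilityMeasure μ] (hP : ∀ᵐ x ∂P, ‖x‖ ≤ R) (hY : Measurable Y)
    (hlaw : μ.map Y = gaussianMix P l 1) (hl : 0 ≤ l) (hη : 0 ≤ η) {l' B : ℝ} {n : ℕ}
    (hl' : l + n * η ≤ l') (hB : B = 10 * l' * R ^ 3 + 4 * R ^ 2 * √(Module.finrank ℝ E)) :
    ∃ ν, IsAdvance P R l μ Y (n * η) ((n * η) ^ 2 * B + √n * (η * R)) ν := by
  have hR : 0 ≤ R := nonneg_of_ae_norm_le hP
  have hB_nonneg : 0 ≤ B := by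
    have : 0 ≤ n * η := by positivity
    have : 0 ≤ l' := by linarith
    rw [hB]; positivity
  have chain : ∀ j ≤ n, ∃ ν, IsAdvance P R l μ Y (j * η)
      (j * η * (n * η * B) + √j * (η * R)) ν := by
    intro j
    induction j with
    | zero => exact fun _ => ⟨_, by simpa using IsAdvance.zero (R := R) hY hlaw⟩
    | succ j ih =>
      intro hj
      obtain ⟨ν, hν⟩ := ih (by omega)
      have level_le : j * η ≤ n * η := by gcongr; omega
      have drift := (hν.eLpNorm_posteriorMean_sub_le hP hY hlaw hl (by positivity)
        (show l + j * η ≤ l' by linarith)).trans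
        (ENNReal.ofReal_le_ofReal (by rw [← hB]; gcongr : _ ≤ n * η * B))
      obtain ⟨ν', hν'⟩ := hν.exists_step hP hY hη (by positivity) (by positivity) drift
      refine ⟨ν', ?_⟩
      rw [show ((j + 1 : ℕ) : ℝ) * η = j * η + η by push_cast; ring]
      refine hν'.mono ((sqrt_sq_add_sq_le_add_sqrt_succ_mul (by positivity) (by positivity) j
        rfl).trans_eq ?_)
      push_cast
      ring
  obtain ⟨ν, hν⟩ := chain n le_rfl
  exact ⟨ν, hν.mono (le_of_eq (by ring))⟩


theorem exists_isAdvance_sq [IsProbabilityMeasure μ] (hP : ∀ᵐ x ∂P, ‖x‖ ≤ R) (hY : Measurable Y)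
    (hlaw : μ.map Y = gaussianMix P l 1) (hl : 0 ≤ l) {s l' B : ℝ} (hs : 0 ≤ s) (hl' : l + s ≤ l')
    (hB : 10 * l' * R ^ 3 + 4 * R ^ 2 * √(Module.finrank ℝ E) < B) :
    ∃ ν, IsAdvance P R l μ Y s (s ^ 2 * B) ν := by
  obtain rfl | hs := hs.eq_or_lt
  · exact ⟨_, by simpa using IsAdvance.zero (R := R) hY hlaw⟩
  set B₀ := 10 * l' * R ^ 3 + 4 * R ^ 2 * √(Module.finrank ℝ E) with hB₀
  obtain ⟨n, hn⟩ := exists_nat_gt ((R / (s * (B - B₀))) ^ 2)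
  have gap : 0 < s * (B - B₀) := mul_pos hs (sub_pos.2 hB)
  have n_pos : (0 : ℝ) < n := (sq_nonneg _).trans_lt hn
  have steps : n * (s / n) = s := mul_div_cancel₀ s n_pos.ne'
  have fluctuation : √n * (s / n * R) ≤ s ^ 2 * (B - B₀) := by
    have root_le : R ≤ √n * (s * (B - B₀)) := by
      rw [← div_le_iff₀ gap]; exact le_sqrt_of_sq_le hn.le
    calc √n * (s / n * R) ≤ √n * (s / n * (√n * (s * (B - B₀)))) := by gcongr
      _ = √n ^ 2 / n * s ^ 2 * (B - B₀) := by ring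
      _ = s ^ 2 * (B - B₀) := by rw [sq_sqrt n_pos.le, div_self n_pos.ne', one_mul]
  obtain ⟨ν, hν⟩ := exists_isAdvance (n := n) (η := s / n) hP hY hlaw hl (by positivity)
    (by rwa [steps]) hB₀
  rw [steps] at hν
  exact ⟨ν, hν.mono (by linarith)⟩

end Resampling

section Tweedie

variable {R a b l : ℝ}

lemma hasGradientAt_gaussLogLik_left [CompleteSpace E] (y x : E) :
    HasGradientAt (fun y => gaussLogLik l y x) (l • x) y := by
  rw [hasGradientAt_iff_hasFDerivAt]
  have h := (((innerSL ℝ x).hasFDerivAt (x := y)).const_mul l).sub_const (l ^ 2 * ‖x‖ ^ 2 / 2)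
  refine (h.congr_of_eventuallyEq (.of_forall fun z => ?_)).congr_fderiv ?_
  · simp only [gaussLogLik, innerSL_apply_apply, real_inner_comm]
  · ext v
    simp

variable [MeasurableSpace E] [BorelSpace E] {P : Measure E} [IsProbabilityMeasure P]

/-- The density of `gaussianMix P a b` with respect to the volume, for `b > 0`. -/
def gaussianMixPDF (P : Measure E) (a b : ℝ) (y : E) : ℝ :=
  (b ^ Module.finrank ℝ E)⁻¹ * (stdGaussianPDF (b⁻¹ • y) * gaussEvidence P (a / b) (b⁻¹ • y))

lemma gaussianMixPDF_pos (hb : 0 < b) (y : E) : 0 < gaussianMixPDF P a b y := by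
  have := stdGaussianPDF_pos (b⁻¹ • y)
  have := gaussEvidence_pos (P := P) (l := a / b) (b⁻¹ • y)
  unfold gaussianMixPDF
  positivity

variable [FiniteDimensional ℝ E]

lemma measurable_gaussianMixPDF : Measurable (gaussianMixPDF P a b) := by
  have := (continuous_stdGaussianPDF (E := E)).measurable
  have := measurable_gaussEvidence (P := P) (l := a / b)
  unfold gaussianMixPDF
  fun_prop

lemma map_smul_withDensity_volume (hb : 0 < b) {f : E → ℝ≥0∞} (hf : Measurable f) :
    (volume.withDensity f).map (b • ·) =
      volume.withDensity fun y => ENNReal.ofReal (b ^ Module.finrank ℝ E)⁻¹ * f (b⁻¹ • y) := by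
  have volume_map : (volume : Measure E).map (b • ·) =
      ENNReal.ofReal (b ^ Module.finrank ℝ E)⁻¹ • volume := by
    rw [Measure.map_addHaar_smul _ hb.ne', abs_of_pos (by positivity)]
  refine Measure.ext_of_lintegral _ fun g hg => ?_
  calc ∫⁻ y, g y ∂(volume.withDensity f).map (b • ·)
      = ∫⁻ y, f y * g (b • y) := by
        rw [lintegral_map hg (by fun_prop), lintegral_withDensity_eq_lintegral_mul _ hf
          (by fun_prop)]
        rfl
    _ = ∫⁻ y, f (b⁻¹ • y) * g y ∂(volume : Measure E).map (b • ·) := by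
        rw [lintegral_map (by fun_prop) (by fun_prop)]
        simp only [inv_smul_smul₀ hb.ne']
    _ = ENNReal.ofReal (b ^ Module.finrank ℝ E)⁻¹ * ∫⁻ y, f (b⁻¹ • y) * g y := by
        rw [volume_map, lintegral_smul_measure, smul_eq_mul]
    _ = _ := by
        rw [lintegral_withDensity_eq_lintegral_mul _ (by fun_prop) hg,
          ← lintegral_const_mul _ (by fun_prop)]
        simp only [Pi.mul_apply, mul_assoc]

lemma gaussianMix_eq_withDensity (hb : 0 < b) :
    gaussianMix P a b =
      volume.withDensity fun y => ENNReal.ofReal (gaussianMixPDF P a b y) := by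
  have density_measurable := (continuous_stdGaussianPDF (E := E)).measurable.ennreal_ofReal
  have evidence_measurable := (measurable_gaussEvidence (P := P) (l := a / b)).ennreal_ofReal
  have mix_eq : gaussianMix P a b = (gaussianMix P (a / b) 1).map (b • ·) := by
    rw [gaussianMix_map_smul, mul_one, mul_div_cancel₀ _ hb.ne']
  rw [mix_eq, gaussianMix_one_eq_withDensity, stdGaussian_eq_withDensity,
    ← withDensity_mul _ density_measurable evidence_measurable,
    map_smul_withDensity_volume hb (density_measurable.mul evidence_measurable)]
  congr 1 with y
  rw [gaussianMixPDF, ENNReal.ofReal_mul (by positivity),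
    ENNReal.ofReal_mul (stdGaussianPDF_pos _).le, Pi.mul_apply]

lemma hasGradientAt_gaussEvidence (hP : ∀ᵐ x ∂P, ‖x‖ ≤ R) (y : E) :
    HasGradientAt (gaussEvidence P l) (gaussEvidence P l y • l • posteriorMean P l y) y := by
  let dual := InnerProductSpace.toDual ℝ E
  have hasFDerivAt_exp (x z : E) : HasFDerivAt (fun z => exp (gaussLogLik l z x))
      (exp (gaussLogLik l z x) • dual (l • x)) z :=
    (hasGradientAt_gaussLogLik_left z x).hasFDerivAt.exp
  have norm_fderiv_le {x z : E} (hx : ‖x‖ ≤ R) (hz : z ∈ Metric.ball y 1) :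
      ‖exp (gaussLogLik l z x) • dual (l • x)‖ ≤ exp ((‖y‖ + 1) ^ 2 / 2) * (|l| * R) := by
    have hz' : ‖z‖ ≤ ‖y‖ + 1 := by
      linarith [norm_le_norm_add_norm_sub' z y, mem_ball_iff_norm.1 hz]
    rw [norm_smul, LinearIsometryEquiv.norm_map, norm_smul, norm_of_nonneg (exp_pos _).le,
      norm_eq_abs]
    gcongr
    exact (gaussLogLik_le z x).trans (by gcongr)
  have gradient_eq : ∫ x, exp (gaussLogLik l y x) • dual (l • x) ∂P =
      dual (gaussEvidence P l y • l • posteriorMean P l y) := by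
    rw [integral_exp_smul_eq (integrable_exp_gaussLogLik y), ← gaussPosterior_apply]
    simp only [map_smulₛₗ, conj_trivial, integral_smul, posteriorMean, gaussEvidence]
    congr 2
    exact (innerSL ℝ (E := E)).integral_comp_comm (integrable_id_gaussPosterior hP y)
  rw [hasGradientAt_iff_hasFDerivAt, ← gradient_eq]
  refine hasFDerivAt_integral_of_dominated_of_fderiv_le (Metric.ball_mem_nhds y one_pos)
    (.of_forall fun z => ?_) (integrable_exp_gaussLogLik y) ?_
    (hP.mono fun x hx z hz => norm_fderiv_le hx hz) (integrable_const _)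
    (ae_of_all _ fun x z _ => hasFDerivAt_exp x z)
  · fun_prop
  · have : Continuous fun x => dual (l • x) := by fun_prop
    fun_prop

lemma hasGradientAt_log_gaussEvidence (hP : ∀ᵐ x ∂P, ‖x‖ ≤ R) (y : E) :
    HasGradientAt (fun y => log (gaussEvidence P l y)) (l • posteriorMean P l y) y := by
  have evidence_ne_zero := (gaussEvidence_pos (P := P) (l := l) y).ne'
  rw [hasGradientAt_iff_hasFDerivAt]
  refine ((hasGradientAt_gaussEvidence hP y).hasFDerivAt.log evidence_ne_zero).congr_fderiv ?_
  simp only [map_smulₛₗ, conj_trivial, inv_smul_smul₀ evidence_ne_zero]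

lemma hasGradientAt_log_gaussianMixPDF (hP : ∀ᵐ x ∂P, ‖x‖ ≤ R) (hb : 0 < b) (y : E) :
    HasGradientAt (fun y => log (gaussianMixPDF P a b y))
      ((b ^ 2)⁻¹ • (a • posteriorMean P (a / b) (b⁻¹ • y) - y)) y := by
  have log_eq (z : E) : log (gaussianMixPDF P a b z) =
      log ((b ^ Module.finrank ℝ E)⁻¹ * (2 * π) ^ (-(Module.finrank ℝ E : ℝ) / 2)) +
        (-1 / 2 * ‖b⁻¹ • z‖ ^ 2 + log (gaussEvidence P (a / b) (b⁻¹ • z))) := by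
    have hZ := gaussEvidence_pos (P := P) (l := a / b) (b⁻¹ • z)
    rw [gaussianMixPDF, stdGaussianPDF, mul_assoc _ (exp _), ← mul_assoc,
      log_mul (by positivity) (by positivity), log_mul (by positivity) hZ.ne', log_exp]
    ring
  simp only [log_eq, hasGradientAt_iff_hasFDerivAt]
  have scaling : HasFDerivAt (fun z : E => b⁻¹ • z) (b⁻¹ • .id ℝ E) y :=
    (hasFDerivAt_id (𝕜 := ℝ) y).const_smul b⁻¹
  have gaussian := ((hasStrictFDerivAt_norm_sq (b⁻¹ • y)).hasFDerivAt.comp y scaling).const_mul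
    (-1 / 2)
  have evidence := (hasGradientAt_log_gaussEvidence (l := a / b) hP (b⁻¹ • y)).hasFDerivAt.comp y
    scaling
  refine ((gaussian.add evidence).const_add _).congr_fderiv ?_
  ext v
  simp only [map_smul, ContinuousLinearMap.comp_smulₛₗ, map_inv₀, ringHom_apply,
    ContinuousLinearMap.comp_id, _root_.add_apply, _root_.smul_apply, coe_innerSL_apply,
    smul_eq_mul, nsmul_eq_mul, Nat.cast_ofNat, InnerProductSpace.toDual_apply_apply, map_sub,
    _root_.sub_apply]
  field_simp
  ring

end Tweedie

section Coupling

variable {F Ω : Type*} [NormedAddCommGroup F] [MeasurableSpace F] [MeasurableSpace Ω]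
  {μ ν : Measure F} {c c' : ℝ}

/-- Some coupling of `μ` and `ν` moves mass by at most `c` in `L²`: the bound `W₂(μ, ν) ≤ c` on the
Wasserstein-2 distance, in a form that avoids the infimum over couplings. -/
def L2Coupled (μ ν : Measure F) (c : ℝ) : Prop :=
  ∃ ρ : Measure (F × F), ρ.map Prod.fst = μ ∧ ρ.map Prod.snd = ν ∧
    eLpNorm (fun p => p.1 - p.2) 2 ρ ≤ ENNReal.ofReal c

lemma L2Coupled.mono (h : L2Coupled μ ν c) (hc : c ≤ c') : L2Coupled μ ν c' :=
  let ⟨ρ, hμ, hν, hρ⟩ := h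
  ⟨ρ, hμ, hν, hρ.trans (ENNReal.ofReal_le_ofReal hc)⟩

lemma l2Coupled_of_subsingleton [Subsingleton F] (μ ν : Measure F) [IsProbabilityMeasure μ]
    [IsProbabilityMeasure ν] (c : ℝ) : L2Coupled μ ν c := by
  refine ⟨μ.prod ν, measurePreserving_fst.map_eq, measurePreserving_snd.map_eq, ?_⟩
  simp [Subsingleton.elim (_ : F) 0]

variable [BorelSpace F] [SecondCountableTopology F]

lemma L2Coupled.exists_integral_norm_sub_sq_le [IsProbabilityMeasure μ] (h : L2Coupled μ ν c)
    (hc : 0 ≤ c) : ∃ ρ : Measure (F × F), IsProbabilityMeasure ρ ∧ ρ.map Prod.fst = μ ∧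
      ρ.map Prod.snd = ν ∧ ∫ p, ‖p.1 - p.2‖ ^ 2 ∂ρ ≤ c ^ 2 := by
  obtain ⟨ρ, rfl, hν, hρ⟩ := h
  have prob : IsProbabilityMeasure ρ :=
    (Measure.isProbabilityMeasure_map_iff measurable_fst.aemeasurable).1 inferInstance
  exact ⟨ρ, prob, rfl, hν, integral_norm_sq_le_of_eLpNorm_two_le (by fun_prop) hc hρ⟩

lemma l2Coupled_map {ρ : Measure Ω} {X Y : Ω → F} (hX : Measurable X) (hY : Measurable Y)
    (h : eLpNorm (fun ω => X ω - Y ω) 2 ρ ≤ ENNReal.ofReal c) :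
    L2Coupled (ρ.map X) (ρ.map Y) c := by
  refine ⟨ρ.map fun ω => (X ω, Y ω), ?_, ?_, ?_⟩
  · rw [Measure.map_map (by fun_prop) (by fun_prop)]; rfl
  · rw [Measure.map_map (by fun_prop) (by fun_prop)]; rfl
  · rwa [eLpNorm_map_measure (by fun_prop) (by fun_prop)]

lemma map_add_snd_prod {ρ : Measure Ω} [SFinite ρ] {X : Ω → F} (hX : Measurable X)
    (κ : Measure F) [SFinite κ] :
    (ρ.prod κ).map (fun p => X p.1 + p.2) = ρ.map X ∗ κ := by
  rw [Measure.conv, ← Measure.map_id (μ := κ), Measure.map_prod_map _ _ hX measurable_id,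
    Measure.map_id, Measure.map_map (by fun_prop) (by fun_prop)]
  rfl

lemma L2Coupled.conv [IsProbabilityMeasure μ] (h : L2Coupled μ ν c) (κ : Measure F)
    [IsProbabilityMeasure κ] : L2Coupled (μ ∗ κ) (ν ∗ κ) c := by
  obtain ⟨ρ, rfl, rfl, hρ⟩ := h
  have : IsProbabilityMeasure ρ :=
    (Measure.isProbabilityMeasure_map_iff measurable_fst.aemeasurable).1 inferInstance
  rw [← map_add_snd_prod measurable_fst, ← map_add_snd_prod measurable_snd]
  refine l2Coupled_map (by fun_prop) (by fun_prop) ?_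
  simp only [add_sub_add_right_eq_sub]
  exact (eLpNorm_comp_measurePreserving (g := fun p : F × F => p.1 - p.2) (by fun_prop)
    measurePreserving_fst).le.trans hρ

lemma l2Coupled_gaussianMix_stdGaussian [FiniteDimensional ℝ E] [MeasurableSpace E]
    [BorelSpace E] {P : Measure E} [IsProbabilityMeasure P] {R a b A B : ℝ}
    (hP : ∀ᵐ x ∂P, ‖x‖ ≤ R) (ha : |a| ≤ A) (hb : |b - 1| ≤ B) :
    L2Coupled (gaussianMix P a b) (stdGaussian E) (A * R + B * √(Module.finrank ℝ E)) := by
  have coupled := l2Coupled_map (ρ := P.prod (stdGaussian E)) (X := fun p => a • p.1 + b • p.2)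
    (Y := Prod.snd) (by fun_prop) measurable_snd
    (c := A * R + B * √(Module.finrank ℝ E)) ?_
  · rwa [← gaussianMix_eq_map_prod, measurePreserving_snd.map_eq] at coupled
  have difference (p : E × E) : a • p.1 + b • p.2 - p.2 = a • p.1 + (b - 1) • p.2 := by module
  have bound := eLpNorm_id_gaussianMix_le hP ha hb
  rw [gaussianMix_eq_map_prod, eLpNorm_map_measure (by fun_prop) (by fun_prop),
    Function.id_comp] at bound
  simpa only [difference] using bound

end Coupling

section OrnsteinUhlenbeckScales

variable {r s u h q : ℝ}

/-- The standard deviation of the noise in the Ornstein–Uhlenbeck marginal at time `r`. -/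
def ouStd (r : ℝ) : ℝ := √(1 - exp (-r))

/-- The signal-to-noise ratio of the Ornstein–Uhlenbeck marginal at time `r`: the amplitude
`exp (-r / 2)` of the signal divided by the standard deviation of the noise. -/
def ouSNR (r : ℝ) : ℝ := exp (-r / 2) / ouStd r

lemma ouStd_sq (hr : 0 ≤ r) : ouStd r ^ 2 = 1 - exp (-r) :=
  sq_sqrt (sub_nonneg.2 (exp_le_one_iff.2 (by linarith)))

lemma ouStd_nonneg (r : ℝ) : 0 ≤ ouStd r := sqrt_nonneg _

lemma ouStd_pos (hr : 0 < r) : 0 < ouStd r :=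
  sqrt_pos.2 (sub_pos.2 (exp_lt_one_iff.2 (by linarith)))

lemma ouStd_le_one (r : ℝ) : ouStd r ≤ 1 :=
  sqrt_le_one.2 (by linarith [exp_pos (-r)])

lemma ouStd_mono (h : r ≤ s) : ouStd r ≤ ouStd s :=
  sqrt_le_sqrt (by linarith [exp_le_exp.2 (neg_le_neg h)])

lemma exp_half_sq (r : ℝ) : exp (r / 2) ^ 2 = exp r := by
  rw [← exp_nat_mul]; congr 1; push_cast; ring

lemma one_sub_exp_neg_le (r : ℝ) : 1 - exp (-r) ≤ r := by linarith [add_one_le_exp (-r)]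

lemma one_sub_exp_neg_nonneg (hr : 0 ≤ r) : 0 ≤ 1 - exp (-r) :=
  sub_nonneg.2 (exp_le_one_iff.2 (by linarith))

lemma exp_half_mul_one_sub (hu : 0 < u) (huh : 0 ≤ u - h) :
    exp (h / 2) * (1 - (1 - exp (-h)) / ouStd u ^ 2) =
      exp (-h / 2) * ouStd (u - h) ^ 2 / ouStd u ^ 2 := by
  have := ouStd_pos hu
  have half : exp (h / 2) * exp (-h) = exp (-h / 2) := by rw [← exp_add]; congr 1; ring
  have shift : exp (-h / 2) * exp (-(u - h)) = exp (h / 2) * exp (-u) := by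
    simp only [← exp_add]; congr 1; ring
  field_simp
  rw [ouStd_sq hu.le, ouStd_sq huh]
  simp only [neg_div] at *
  linear_combination half + shift

lemma le_ouStd_sub_two_mul_sq (hq : q ≤ 1 - exp (-(u - h))) (hh : 0 ≤ h) (hhq : 2 * h ≤ q) :
    q - h ≤ ouStd (u - 2 * h) ^ 2 := by
  have nonneg : 0 ≤ u - 2 * h := by linarith [one_sub_exp_neg_le (u - h)]
  have shift : exp (-(u - 2 * h)) * exp (-h) = exp (-(u - h)) := by rw [← exp_add]; congr 1; ring
  have : exp (-(u - 2 * h)) ≤ 1 := exp_le_one_iff.2 (by linarith)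
  rw [ouStd_sq nonneg]
  nlinarith [mul_nonneg (sub_nonneg.2 this) (one_sub_exp_neg_nonneg hh), one_sub_exp_neg_le h]

lemma ouStd_mid_sq_sq_sub (hu : 0 ≤ u - 2 * h) (hh : 0 ≤ h) :
    (ouStd (u - h) ^ 2) ^ 2 - (ouStd (u - 2 * h) * ouStd u) ^ 2 =
      exp (-(u - 2 * h)) * (1 - exp (-h)) ^ 2 := by
  rw [mul_pow, ouStd_sq (by linarith), ouStd_sq hu, ouStd_sq (by linarith),
    show -(u - h) = -(u - 2 * h) + -h by ring, show -u = -(u - 2 * h) + -h + -h by ring]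
  simp only [exp_add]
  ring

lemma abs_ouStd_mul_sub_le (hu : 0 ≤ u - 2 * h) (hh : 0 ≤ h) (hq : 0 < q)
    (hqu : q ≤ ouStd (u - h) ^ 2) :
    |ouStd (u - 2 * h) * ouStd u - ouStd (u - h) ^ 2| ≤ h ^ 2 / q := by
  set x := ouStd (u - 2 * h) * ouStd u
  set y := ouStd (u - h) ^ 2
  have hx : 0 ≤ x := mul_nonneg (ouStd_nonneg _) (ouStd_nonneg _)
  have hy : 0 < y := hq.trans_le hqu
  have decay := one_sub_exp_neg_nonneg hh
  have sq_sub : y ^ 2 - x ^ 2 = _ := ouStd_mid_sq_sq_sub hu hh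
  have sq_sub_nonneg : 0 ≤ y ^ 2 - x ^ 2 := by rw [sq_sub]; positivity
  have sq_sub_le : y ^ 2 - x ^ 2 ≤ h ^ 2 := by
    rw [sq_sub]
    calc _ ≤ 1 * h ^ 2 := by
          gcongr
          · exact exp_le_one_iff.2 (by linarith)
          · exact one_sub_exp_neg_le h
      _ = h ^ 2 := one_mul _
  have x_le_y : x ≤ y := (sq_le_sq₀ hx hy.le).1 (sub_nonneg.1 sq_sub_nonneg)
  rw [abs_sub_comm, abs_of_nonneg (sub_nonneg.2 x_le_y), le_div_iff₀ hq]
  nlinarith [mul_nonneg (sub_nonneg.2 x_le_y) hx,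
    mul_nonneg (sub_nonneg.2 x_le_y) (sub_nonneg.2 hqu)]

lemma abs_reverse_gain_sub_le (hu : 0 ≤ u - 2 * h) (hh : 0 ≤ h) (hq : 0 < q)
    (hqu : q ≤ ouStd (u - h) ^ 2) :
    |exp (-h / 2) * ouStd (u - 2 * h) / ouStd u - exp (-h / 2) * ouStd (u - h) ^ 2 / ouStd u ^ 2| ≤
      h ^ 2 / q ^ 2 := by
  have q_le : q ≤ ouStd u ^ 2 :=
    hqu.trans (pow_le_pow_left₀ (ouStd_nonneg _) (ouStd_mono (by linarith)) 2)
  have sq_pos : 0 < ouStd u ^ 2 := hq.trans_le q_le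
  have std_ne : ouStd u ≠ 0 := fun h0 => by simp [h0] at sq_pos
  have factor : exp (-h / 2) * ouStd (u - 2 * h) / ouStd u -
      exp (-h / 2) * ouStd (u - h) ^ 2 / ouStd u ^ 2 =
      exp (-h / 2) * (ouStd (u - 2 * h) * ouStd u - ouStd (u - h) ^ 2) / ouStd u ^ 2 := by
    field_simp
  rw [factor, abs_div, abs_mul, abs_exp, abs_of_pos sq_pos]
  calc _ ≤ 1 * (h ^ 2 / q) / q := by
        gcongr
        · exact exp_le_one_iff.2 (by linarith)
        · exact abs_ouStd_mul_sub_le hu hh hq hqu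
    _ = h ^ 2 / q ^ 2 := by field_simp

lemma ouSNR_nonneg (r : ℝ) : 0 ≤ ouSNR r := div_nonneg (exp_pos _).le (ouStd_nonneg _)

lemma ouSNR_anti (hr : 0 < r) (h : r ≤ s) : ouSNR s ≤ ouSNR r :=
  div_le_div₀ (exp_pos _).le (exp_le_exp.2 (by linarith)) (ouStd_pos hr) (ouStd_mono h)

lemma ouSNR_sub_mul_le (hu : 0 < u - 2 * h) (hh : 0 ≤ h) :
    (ouSNR (u - 2 * h) - ouSNR u) * (ouStd (u - 2 * h) * ouStd u ^ 2) ≤ 2 * h := by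
  have hs' := ouStd_pos hu
  have hs := ouStd_pos (show 0 < u by linarith)
  have snr_le := ouSNR_anti hu (show u - 2 * h ≤ u by linarith)
  set l' := ouSNR (u - 2 * h) with hl'
  set l := ouSNR u with hl
  set s' := ouStd (u - 2 * h)
  set s := ouStd u
  have amplitude' : l' * s' = exp (-(u - 2 * h) / 2) := by
    rw [hl', ouSNR]; exact div_mul_cancel₀ _ hs'.ne'
  have amplitude : l * s = exp (-u / 2) := by rw [hl, ouSNR]; exact div_mul_cancel₀ _ hs.ne'
  have amplitude'_le : l' * s' ≤ 1 := amplitude' ▸ exp_le_one_iff.2 (by linarith)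
  have std' : s' ^ 2 = 1 - (l' * s') ^ 2 := by
    rw [amplitude', exp_half_sq, ← ouStd_sq hu.le]
  have std : s ^ 2 = 1 - (l * s) ^ 2 := by
    rw [amplitude, exp_half_sq, ← ouStd_sq (by linarith)]
  have shift : (l * s) ^ 2 = (l' * s') ^ 2 * exp (-(2 * h)) := by
    rw [amplitude, amplitude', exp_half_sq, exp_half_sq, ← exp_add]; congr 1; ring
  have hl'_pos : 0 < l' * s' := amplitude' ▸ exp_pos _
  have sq_sub : (l' ^ 2 - l ^ 2) * (s' ^ 2 * s ^ 2) = (l' * s') ^ 2 * (1 - exp (-(2 * h))) := by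
    linear_combination (l' * s') ^ 2 * std - (l * s) ^ 2 * std' - shift
  have l_nonneg : 0 ≤ l := ouSNR_nonneg u
  refine le_of_mul_le_mul_left ?_ hl'_pos
  calc l' * s' * ((l' - l) * (s' * s ^ 2)) = (l' - l) * l' * (s' ^ 2 * s ^ 2) := by ring
    _ ≤ (l' - l) * (l' + l) * (s' ^ 2 * s ^ 2) := by
      have := sub_nonneg.2 snr_le
      gcongr
      linarith
    _ = (l' * s') * (l' * s') * (1 - exp (-(2 * h))) := by linear_combination sq_sub
    _ ≤ (l' * s') * 1 * (2 * h) := by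
      gcongr
      · exact one_sub_exp_neg_nonneg (by linarith)
      · exact one_sub_exp_neg_le _
    _ = l' * s' * (2 * h) := by ring

lemma ouSNR_sub_sq_le (hq : 0 < q) (hqu : q ≤ 1 - exp (-(u - h))) (hh : 0 ≤ h) (hhq : 2 * h ≤ q) :
    (ouSNR (u - 2 * h) - ouSNR u) ^ 2 ≤ 8 * h ^ 2 / q ^ 3 := by
  have hu : 0 < u - 2 * h := by linarith [one_sub_exp_neg_le (u - h)]
  have snr_sub_nonneg := sub_nonneg.2 (ouSNR_anti hu (show u - 2 * h ≤ u by linarith))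
  have std'_sq := le_ouStd_sub_two_mul_sq hqu hh hhq
  have std_sq : q ≤ ouStd u ^ 2 := by
    rw [ouStd_sq (by linarith)]
    exact hqu.trans (by linarith [exp_le_exp.2 (show -u ≤ -(u - h) by linarith)])
  rw [le_div_iff₀ (by positivity)]
  calc (ouSNR (u - 2 * h) - ouSNR u) ^ 2 * q ^ 3
      = 2 * ((ouSNR (u - 2 * h) - ouSNR u) ^ 2 * (q / 2 * q ^ 2)) := by ring
    _ ≤ 2 * ((ouSNR (u - 2 * h) - ouSNR u) ^ 2 * (ouStd (u - 2 * h) ^ 2 * (ouStd u ^ 2) ^ 2)) := by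
      gcongr
      linarith
    _ = 2 * ((ouSNR (u - 2 * h) - ouSNR u) * (ouStd (u - 2 * h) * ouStd u ^ 2)) ^ 2 := by ring
    _ ≤ 2 * (2 * h) ^ 2 := by
      have := ouStd_nonneg (u - 2 * h)
      have := pow_le_pow_left₀ (by positivity) (ouSNR_sub_mul_le hu hh) 2
      gcongr
    _ = 8 * h ^ 2 := by ring

lemma ouSNR_sub_two_mul_le (hq : 0 < q) (hqu : q ≤ 1 - exp (-(u - h))) (hh : 0 ≤ h)
    (hhq : 2 * h ≤ q) : ouSNR (u - 2 * h) ≤ 2 / q := by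
  have hu : 0 < u - 2 * h := by linarith [one_sub_exp_neg_le (u - h)]
  have std_sq := le_ouStd_sub_two_mul_sq hqu hh hhq
  have std_ge : q / 2 ≤ ouStd (u - 2 * h) := by
    nlinarith [ouStd_nonneg (u - 2 * h), ouStd_le_one (u - 2 * h)]
  calc ouSNR (u - 2 * h) ≤ 1 / (q / 2) := by
        unfold ouSNR
        gcongr
        exact exp_le_one_iff.2 (by linarith)
    _ = 2 / q := by field_simp

end OrnsteinUhlenbeckScales

section ReverseStep

variable {u h : ℝ}

/-- One step of length `h` of the exponential integrator for the reverse-time Ornstein–Uhlenbeck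
process with the score `s`, before the noise is added. -/
def reverseStep (h : ℝ) (s : E → E) (x : E) : E := exp (h / 2) • (x + (1 - exp (-h)) • s x)

lemma reverseStep_eq (s : E → E) (hu : 0 < u) (huh : 0 ≤ u - h) (x : E) :
    reverseStep h s x = (exp (-h / 2) * ouStd (u - h) ^ 2 / ouStd u ^ 2) • x +
      (exp (h / 2) * (1 - exp (-h))) • (s x + (ouStd u ^ 2)⁻¹ • x) := by
  rw [← exp_half_mul_one_sub hu huh, reverseStep, div_eq_mul_inv]
  module

lemma exp_half_mul_one_sub_exp_neg (h : ℝ) :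
    exp (h / 2) * (1 - exp (-h)) = exp (-h / 2) * (exp h - 1) := by
  have left : exp (h / 2) * exp (-h) = exp (-h / 2) := by rw [← exp_add]; congr 1; ring
  have right : exp (-h / 2) * exp h = exp (h / 2) := by rw [← exp_add]; congr 1; ring
  linear_combination -left - right

lemma lipschitzWith_reverseStep {s : E → E} {L : ℝ≥0} (hh : 0 ≤ h) (huh : h ≤ u) (hu : 0 < u)
    {K Λ : ℝ≥0} (hK : (K : ℝ) = L * exp (-u))
    (hΛ : (Λ : ℝ) = exp (-h / 2 + L * (exp (-(u - h)) - exp (-u))))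
    (hs : LipschitzWith K fun x => s x + (ouStd u ^ 2)⁻¹ • x) :
    LipschitzWith Λ (reverseStep h s) := by
  have hσ := ouStd_pos hu
  refine LipschitzWith.of_dist_le_mul fun x y => ?_
  have lipschitz := hs.dist_le_mul x y
  simp only [dist_eq_norm] at lipschitz ⊢
  have gain_le : exp (-h / 2) * ouStd (u - h) ^ 2 / ouStd u ^ 2 ≤ exp (-h / 2) := by
    rw [div_le_iff₀ (by positivity)]
    gcongr
    · exact ouStd_nonneg _
    · exact ouStd_mono (by linarith)
  have rate_nonneg : 0 ≤ exp (h / 2) * (1 - exp (-h)) :=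
    mul_nonneg (exp_pos _).le (one_sub_exp_neg_nonneg hh)
  have split : reverseStep h s x - reverseStep h s y =
      (exp (-h / 2) * ouStd (u - h) ^ 2 / ouStd u ^ 2) • (x - y) +
      (exp (h / 2) * (1 - exp (-h))) •
        (s x + (ouStd u ^ 2)⁻¹ • x - (s y + (ouStd u ^ 2)⁻¹ • y)) := by
    rw [reverseStep_eq s hu (by linarith), reverseStep_eq s hu (by linarith)]
    module
  have shift : exp h * exp (-u) = exp (-(u - h)) := by rw [← exp_add]; congr 1; ring
  calc ‖reverseStep h s x - reverseStep h s y‖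
      ≤ exp (-h / 2) * ‖x - y‖ + exp (h / 2) * (1 - exp (-h)) * (K * ‖x - y‖) := by
        rw [split]
        refine norm_add_le_of_le ?_ ?_
        · rw [norm_smul, norm_of_nonneg (by positivity)]
          gcongr
        · rw [norm_smul, norm_of_nonneg rate_nonneg]
          gcongr
    _ = exp (-h / 2) * (L * (exp (-(u - h)) - exp (-u)) + 1) * ‖x - y‖ := by
        rw [exp_half_mul_one_sub_exp_neg, hK]
        linear_combination exp (-h / 2) * L * ‖x - y‖ * shift
    _ ≤ Λ * ‖x - y‖ := by
        rw [hΛ, exp_add]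
        gcongr
        exact add_one_le_exp _

variable [MeasurableSpace E] {P : Measure E}

lemma measurable_reverseStep [BorelSpace E] [SecondCountableTopology E] {s : E → E}
    (hs : Measurable s) : Measurable (reverseStep h s) := by
  unfold reverseStep; fun_prop

/-- The score of the Ornstein–Uhlenbeck marginal at time `u`, read off the denoiser through
Tweedie's formula. -/
def ouScore (P : Measure E) [SFinite P] (u : ℝ) (y : E) : E :=
  (ouStd u ^ 2)⁻¹ • (exp (-u / 2) • posteriorMean P (ouSNR u) ((ouStd u)⁻¹ • y) - y)

lemma smul_sub_reverseStep_ouScore [SFinite P] (hu : 0 < u - 2 * h) (hh : 0 ≤ h) (y y' m : E)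
    (hm : m = posteriorMean P (ouSNR u) ((ouStd u)⁻¹ • y)) :
    (exp (-h / 2) * ouStd (u - 2 * h)) • y' - reverseStep h (ouScore P u) y =
      (exp (-h / 2) * ouStd (u - 2 * h)) •
        (y' - (ouStd u)⁻¹ • y - (ouSNR (u - 2 * h) - ouSNR u) • m) +
      (exp (-h / 2) * ouStd (u - 2 * h) / ouStd u -
        exp (-h / 2) * ouStd (u - h) ^ 2 / ouStd u ^ 2) • (y - exp (-u / 2) • m) := by
  have hσ := ouStd_pos (show 0 < u by linarith)
  have hσ' := ouStd_pos hu
  have shift : exp (-h / 2) * exp (-(u - 2 * h) / 2) = exp (h / 2) * exp (-u / 2) := by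
    simp only [← exp_add]; congr 1; ring
  have amplitude : exp (-h / 2) * ouStd (u - 2 * h) * ouSNR (u - 2 * h) =
      exp (h / 2) * exp (-u / 2) := by
    rw [← shift, ouSNR, mul_assoc, mul_div_cancel₀ _ hσ'.ne']
  have score : ouScore P u y + (ouStd u ^ 2)⁻¹ • y = ((ouStd u ^ 2)⁻¹ * exp (-u / 2)) • m := by
    rw [ouScore, ← hm]; module
  have gain := exp_half_mul_one_sub (h := h) (show 0 < u by linarith) (by linarith)
  have snr : ouSNR u = (ouStd u)⁻¹ * exp (-u / 2) := by rw [ouSNR]; field_simp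
  rw [reverseStep_eq (u := u) _ (by linarith) (by linarith), score, ← gain]
  simp only [smul_sub, sub_smul, smul_smul, amplitude, snr]
  module

/-- The constant in front of `√d * h ^ 2` in the error of one exact-score reverse step of length
`h`, for data supported in a ball of radius `R` and noise variance at least `q`. -/
def localErrorConst (R q : ℝ) : ℝ := 5 * exp (3 * (R / q) ^ 2 + 2 / q)

lemma localErrorConst_pos {R q : ℝ} : 0 < localErrorConst R q := by
  unfold localErrorConst; positivity

lemma reverse_local_error_le {R q H D : ℝ} (hR : 0 ≤ R) (hq : 0 < q) (hq1 : q ≤ 1) (hD : 1 ≤ D)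
    (hH : H ^ 2 ≤ 8 * h ^ 2 / q ^ 3) :
    H ^ 2 * (10 * (2 / q) * R ^ 3 + (4 * R ^ 2 + q) * D) + h ^ 2 / q ^ 2 * (2 * R + D) ≤
      localErrorConst R q * D * h ^ 2 := by
  set r := R / q with hr
  set L := 1 / q with hL
  have : 0 ≤ r := by positivity
  have hL1 : 1 ≤ L := one_le_one_div hq hq1
  have exp_r : 1 + 3 * r ^ 2 + 9 / 2 * r ^ 4 ≤ exp (3 * r ^ 2) := by
    have := quadratic_le_exp_of_nonneg (show 0 ≤ 3 * r ^ 2 by positivity)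
    linarith
  have exp_L : 7 * L ^ 2 ≤ exp (2 * L) := by
    have linear : 2.7 * L ≤ exp L := by
      have tangent : L ≤ exp (L - 1) := by linarith [add_one_le_exp (L - 1)]
      calc 2.7 * L ≤ exp 1 * exp (L - 1) := by
            gcongr
            linarith [exp_one_gt_d9]
        _ = exp L := by rw [← exp_add]; congr 1; ring
    calc 7 * L ^ 2 ≤ (2.7 * L) ^ 2 := by nlinarith [sq_nonneg L]
      _ ≤ exp L ^ 2 := by gcongr
      _ = exp (2 * L) := by rw [← exp_nat_mul]; norm_cast
  have polynomial : L * (2 * r + 160 * r ^ 3 + 32 * r ^ 2) + 9 * L ^ 2 ≤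
      L ^ 2 * (35 * (1 + 3 * r ^ 2 + 9 / 2 * r ^ 4)) := by
    have : 2 * r + 160 * r ^ 3 + 32 * r ^ 2 + 9 ≤ 35 * (1 + 3 * r ^ 2 + 9 / 2 * r ^ 4) := by
      nlinarith [sq_nonneg (r - 1), sq_nonneg (r ^ 2 - r), sq_nonneg (r ^ 2 - 1)]
    have : L ≤ L ^ 2 := by nlinarith
    nlinarith [show 0 ≤ 2 * r + 160 * r ^ 3 + 32 * r ^ 2 by positivity]
  calc _ ≤ 8 * h ^ 2 / q ^ 3 * (10 * (2 / q) * R ^ 3 + (4 * R ^ 2 + q) * D) +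
        h ^ 2 / q ^ 2 * (2 * R + D) := by gcongr
    _ = (L * (2 * r + 160 * r ^ 3) + (L * (32 * r ^ 2) + 9 * L ^ 2) * D) * h ^ 2 := by
      rw [hr, hL]; field_simp; ring
    _ ≤ (L * (2 * r + 160 * r ^ 3) * D + (L * (32 * r ^ 2) + 9 * L ^ 2) * D) * h ^ 2 := by
      gcongr (?_ + _) * _
      exact le_mul_of_one_le_right (by positivity) hD
    _ = (L * (2 * r + 160 * r ^ 3 + 32 * r ^ 2) + 9 * L ^ 2) * D * h ^ 2 := by ring
    _ ≤ L ^ 2 * (35 * (1 + 3 * r ^ 2 + 9 / 2 * r ^ 4)) * D * h ^ 2 := by gcongr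
    _ = 5 * ((1 + 3 * r ^ 2 + 9 / 2 * r ^ 4) * (7 * L ^ 2)) * D * h ^ 2 := by ring
    _ ≤ 5 * (exp (3 * r ^ 2) * exp (2 * L)) * D * h ^ 2 := by gcongr
    _ = localErrorConst R q * D * h ^ 2 := by rw [localErrorConst, ← hr, ← exp_add, hL]; ring_nf

variable [FiniteDimensional ℝ E] [BorelSpace E]

lemma measurable_ouScore [SFinite P] : Measurable (ouScore P u) := by
  unfold ouScore; fun_prop

/-- The law at time `u` of the Ornstein–Uhlenbeck process started from `P`. -/
def ouLaw (P : Measure E) (u : ℝ) : Measure E := gaussianMix P (exp (-u / 2)) (ouStd u)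

instance [IsProbabilityMeasure P] (u : ℝ) : IsProbabilityMeasure (ouLaw P u) :=
  inferInstanceAs (IsProbabilityMeasure (gaussianMix P _ _))

lemma ouLaw_map_inv_smul [SFinite P] (hu : 0 < u) :
    (ouLaw P u).map ((ouStd u)⁻¹ • ·) = gaussianMix P (ouSNR u) 1 := by
  rw [ouLaw, gaussianMix_map_smul, inv_mul_cancel₀ (ouStd_pos hu).ne', inv_mul_eq_div]
  rfl

end ReverseStep

section ReverseCoupling

variable [FiniteDimensional ℝ E] [MeasurableSpace E] [BorelSpace E] {P : Measure E}
  [IsProbabilityMeasure P] {Ω : Type*} [MeasurableSpace Ω] {μ : Measure Ω} {Y : Ω → E} {R u h q : ℝ}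

lemma eLpNorm_sub_smul_posteriorMean_le (hP : ∀ᵐ x ∂P, ‖x‖ ≤ R) (hu : 0 < u) :
    eLpNorm (fun y => y - exp (-u / 2) • posteriorMean P (ouSNR u) ((ouStd u)⁻¹ • y)) 2
      (ouLaw P u) ≤ ENNReal.ofReal (2 * R + √(Module.finrank ℝ E)) := by
  have hR : 0 ≤ R := nonneg_of_ae_norm_le hP
  have amplitude_le : |exp (-u / 2)| ≤ 1 := by
    rw [abs_exp]; exact exp_le_one_iff.2 (by linarith)
  have noise_le : |ouStd u| ≤ 1 := (abs_of_nonneg (ouStd_nonneg u)).trans_le (ouStd_le_one u)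
  have denoiser : eLpNorm (fun y => posteriorMean P (ouSNR u) ((ouStd u)⁻¹ • y)) 2 (ouLaw P u) ≤
      ENNReal.ofReal R :=
    eLpNorm_le_ofReal_of_ae_norm_le (ae_of_all _ fun y => norm_posteriorMean_le hP _)
  have split (y m : E) : y - exp (-u / 2) • m = id y + -exp (-u / 2) • m := by
    simp only [id_eq]; module
  simp only [split]
  refine (eLpNorm_add_le_ofReal one_le_two (by fun_prop) ?_ (by positivity) (by positivity)
    (eLpNorm_id_gaussianMix_le hP amplitude_le noise_le)
    (eLpNorm_smul_le_ofReal _ ((abs_neg _).trans_le amplitude_le) denoiser)).trans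
    (ENNReal.ofReal_le_ofReal (by linarith))
  exact ((measurable_posteriorMean.comp (by fun_prop)).const_smul _).aestronglyMeasurable

lemma exp_half_mul_ouStd_mul_ouSNR (hu : 0 < u - 2 * h) :
    exp (-h / 2) * ouStd (u - 2 * h) * ouSNR (u - 2 * h) = exp (-(u - h) / 2) := by
  rw [ouSNR, mul_assoc, mul_div_cancel₀ _ (ouStd_pos hu).ne', ← exp_add]
  congr 1; ring

lemma IsAdvance.eLpNorm_smul_sub_reverseStep_le {ν : Measure (Ω × E)} {e : ℝ}
    (hν : IsAdvance P R (ouSNR u) μ (fun ω => (ouStd u)⁻¹ • Y ω)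
      (ouSNR (u - 2 * h) - ouSNR u) e ν) (hP : ∀ᵐ x ∂P, ‖x‖ ≤ R) (hY : Measurable Y)
    (hlaw : μ.map Y = ouLaw P u) (hu : 0 < u - 2 * h) (hh : 0 ≤ h) (hq : 0 < q)
    (hqu : q ≤ ouStd (u - h) ^ 2) (he : 0 ≤ e) :
    eLpNorm (fun p => (exp (-h / 2) * ouStd (u - 2 * h)) • p.2 -
        reverseStep h (ouScore P u) (Y p.1)) 2 ν ≤
      ENNReal.ofReal (e + h ^ 2 / q ^ 2 * (2 * R + √(Module.finrank ℝ E))) := by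
  have hR : 0 ≤ R := nonneg_of_ae_norm_le hP
  have gain_le : |exp (-h / 2) * ouStd (u - 2 * h)| ≤ 1 := by
    rw [abs_mul, abs_exp, abs_of_nonneg (ouStd_nonneg _)]
    exact mul_le_one₀ (exp_le_one_iff.2 (by linarith)) (ouStd_nonneg _) (ouStd_le_one _)
  have law : MeasurePreserving (fun p : Ω × E => Y p.1) ν (ouLaw P u) :=
    ⟨by fun_prop, by rw [← hlaw, ← hν.map_fst, Measure.map_map hY measurable_fst]; rfl⟩
  have : Measurable (posteriorMean P (ouSNR u)) := measurable_posteriorMean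
  have drift := (eLpNorm_comp_measurePreserving (p := 2) (g := fun y =>
    y - exp (-u / 2) • posteriorMean P (ouSNR u) ((ouStd u)⁻¹ • y)) (by fun_prop) law).trans_le
    (eLpNorm_sub_smul_posteriorMean_le hP (by linarith))
  have split : (fun p : Ω × E => (exp (-h / 2) * ouStd (u - 2 * h)) • p.2 -
      reverseStep h (ouScore P u) (Y p.1)) = _ :=
    funext fun p : Ω × E => smul_sub_reverseStep_ouScore hu hh (Y p.1) p.2 _ rfl
  rw [split, ← one_mul e]
  exact eLpNorm_add_le_ofReal one_le_two (by fun_prop) (by fun_prop) (by positivity)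
    (by positivity) (eLpNorm_smul_le_ofReal _ gain_le hν.eLpNorm_sub_le)
    (eLpNorm_smul_le_ofReal _ (abs_reverse_gain_sub_le hu.le hh hq hqu) drift)

/- The noise added by the integrator lowers the signal-to-noise ratio from its value at `u - 2 * h`
to that at `u - h`, so the noiseless part of the step has to reach the former. -/
theorem exists_reverse_coupling [IsProbabilityMeasure μ] (hP : ∀ᵐ x ∂P, ‖x‖ ≤ R)
    (hY : Measurable Y) (hlaw : μ.map Y = ouLaw P u) (hq : 0 < q) (hqu : q ≤ 1 - exp (-(u - h)))
    (hh : 0 ≤ h) (hhq : 2 * h ≤ q) (hd : 1 ≤ Module.finrank ℝ E) :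
    ∃ ν : Measure (Ω × E), ν.map Prod.fst = μ ∧
      ν.map Prod.snd = gaussianMix P (exp (-(u - h) / 2)) (exp (-h / 2) * ouStd (u - 2 * h)) ∧
      eLpNorm (fun p => p.2 - reverseStep h (ouScore P u) (Y p.1)) 2 ν ≤
        ENNReal.ofReal (localErrorConst R q * √(Module.finrank ℝ E) * h ^ 2) := by
  have hR : 0 ≤ R := nonneg_of_ae_norm_le hP
  have hu' : 0 < u - 2 * h := by linarith [one_sub_exp_neg_le (u - h)]
  have hu : 0 < u := by linarith
  have snr_le := ouSNR_anti hu' (show u - 2 * h ≤ u by linarith)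
  have dim : 1 ≤ √(Module.finrank ℝ E : ℝ) := one_le_sqrt.2 (by exact_mod_cast hd)
  set a := exp (-h / 2) * ouStd (u - 2 * h) with ha
  set B := 10 * (2 / q) * R ^ 3 + (4 * R ^ 2 + q) * √(Module.finrank ℝ E) with hB
  have observation : μ.map (fun ω => (ouStd u)⁻¹ • Y ω) = gaussianMix P (ouSNR u) 1 := by
    rw [← ouLaw_map_inv_smul hu, ← hlaw, Measure.map_map (by fun_prop) hY]; rfl
  obtain ⟨ν, hν⟩ := exists_isAdvance_sq (B := B) hP (hY.const_smul _) observation (ouSNR_nonneg u)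
    (sub_nonneg.2 snr_le) ((add_sub_cancel _ _).trans_le (ouSNR_sub_two_mul_le hq hqu hh hhq))
    (by rw [hB]; nlinarith)
  refine ⟨ν.map fun p => (p.1, a • p.2), ?_, ?_, ?_⟩
  · rw [Measure.map_map (by fun_prop) (by fun_prop), ← hν.map_fst]; rfl
  · rw [Measure.map_map (by fun_prop) (by fun_prop)]
    change ν.map ((a • ·) ∘ Prod.snd) = _
    rw [← Measure.map_map (by fun_prop) (by fun_prop), hν.map_snd, gaussianMix_map_smul, mul_one,
      add_sub_cancel, ha, exp_half_mul_ouStd_mul_ouSNR hu']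
  · have step := measurable_reverseStep (h := h) (measurable_ouScore (P := P) (u := u))
    rw [eLpNorm_map_measure (by fun_prop) (by fun_prop)]
    exact (hν.eLpNorm_smul_sub_reverseStep_le hP hY hlaw hu' hh hq
      (hqu.trans_eq (ouStd_sq (by linarith)).symm) (by positivity)).trans
      (ENNReal.ofReal_le_ofReal (reverse_local_error_le hR hq
        (hqu.trans (by linarith [exp_pos (-(u - h))])) dim (ouSNR_sub_sq_le hq hqu hh hhq)))

lemma gaussianMix_conv_noise (hh : 0 ≤ h) (hu : 0 ≤ u - 2 * h) :
    gaussianMix P (exp (-(u - h) / 2)) (exp (-h / 2) * ouStd (u - 2 * h)) ∗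
      (stdGaussian E).map (√(1 - exp (-h)) • ·) = ouLaw P (u - h) := by
  refine gaussianMix_conv_stdGaussian ?_
  rw [mul_pow, exp_half_sq, ouStd_sq hu, ouStd_sq (by linarith),
    sq_sqrt (one_sub_exp_neg_nonneg hh), mul_sub, ← exp_add]
  ring_nf

lemma L2Coupled.noiseless_reverseStep {s : E → E} {Λ : ℝ≥0}
    (hs : LipschitzWith Λ (reverseStep h s)) {P' : Measure E} {c e e' : ℝ} (he : 0 ≤ e)
    (he' : 0 ≤ e') (hc : 0 ≤ c) {ρ : Measure (E × E)} (hρ_fst : ρ.map Prod.fst = ouLaw P u)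
    (hρ : eLpNorm (fun p => p.1 - p.2) 2 ρ ≤ ENNReal.ofReal c) {κ : Measure ((E × E) × E)}
    (hκ_fst : κ.map Prod.fst = ρ) (hκ_snd : κ.map Prod.snd = P')
    (hκ : eLpNorm (fun p => p.2 - reverseStep h (ouScore P u) p.1.1) 2 κ ≤ ENNReal.ofReal e)
    (hscore : eLpNorm (fun y => reverseStep h (ouScore P u) y - reverseStep h s y) 2 (ouLaw P u) ≤
      ENNReal.ofReal e') :
    L2Coupled P' ((ρ.map Prod.snd).map (reverseStep h s)) (Λ * c + (e + e')) := by
  have step_meas := hs.continuous.measurable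
  have exact_meas := measurable_reverseStep (h := h) (measurable_ouScore (P := P) (u := u))
  have first : MeasurePreserving (fun p : (E × E) × E => p.1) κ ρ := ⟨measurable_fst, hκ_fst⟩
  have law : MeasurePreserving (fun p : (E × E) × E => p.1.1) κ (ouLaw P u) :=
    MeasurePreserving.comp ⟨measurable_fst, hρ_fst⟩ first
  have score := (eLpNorm_comp_measurePreserving (p := 2) (g := fun y =>
    reverseStep h (ouScore P u) y - reverseStep h s y) (by fun_prop) law).trans_le hscore
  have contraction : eLpNorm (fun p : (E × E) × E =>
      reverseStep h s p.1.1 - reverseStep h s p.1.2) 2 κ ≤ ENNReal.ofReal (Λ * c) := by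
    have lipschitz (p : (E × E) × E) : ‖reverseStep h s p.1.1 - reverseStep h s p.1.2‖ ≤
        Λ * ‖p.1.1 - p.1.2‖ := hs.norm_sub_le _ _
    refine (eLpNorm_le_mul_eLpNorm_of_ae_le_mul (ae_of_all _ lipschitz) 2).trans ?_
    rw [ENNReal.ofReal_mul Λ.coe_nonneg]
    gcongr
    exact (eLpNorm_comp_measurePreserving (g := fun p : E × E => p.1 - p.2) (by fun_prop)
      first).trans_le hρ
  have split (p : (E × E) × E) : p.2 - reverseStep h s p.1.2 =
      (reverseStep h s p.1.1 - reverseStep h s p.1.2) +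
        ((p.2 - reverseStep h (ouScore P u) p.1.1) +
          (reverseStep h (ouScore P u) p.1.1 - reverseStep h s p.1.1)) := by abel
  rw [← hκ_snd, ← hκ_fst, Measure.map_map measurable_snd measurable_fst,
    Measure.map_map step_meas (by fun_prop)]
  refine l2Coupled_map (by fun_prop) (by fun_prop) ?_
  simp only [Function.comp_apply, split]
  exact eLpNorm_add_le_ofReal one_le_two (by fun_prop) (by fun_prop) (by positivity)
    (by positivity) contraction
    (eLpNorm_add_le_ofReal one_le_two (by fun_prop) (by fun_prop) he he' hκ score)

theorem L2Coupled.reverseStep_conv_noise (hP : ∀ᵐ x ∂P, ‖x‖ ≤ R) (hq : 0 < q)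
    (hqu : q ≤ 1 - exp (-(u - h))) (hh : 0 ≤ h) (hhq : 2 * h ≤ q) (hd : 1 ≤ Module.finrank ℝ E)
    {s : E → E} {Λ : ℝ≥0} (hs : LipschitzWith Λ (reverseStep h s)) {e c : ℝ} (he : 0 ≤ e)
    (hc : 0 ≤ c)
    (hscore : eLpNorm (fun y => reverseStep h (ouScore P u) y - reverseStep h s y) 2 (ouLaw P u) ≤
      ENNReal.ofReal e) {ν : Measure E} (hν : L2Coupled (ouLaw P u) ν c) :
    L2Coupled (ouLaw P (u - h))
      (ν.map (reverseStep h s) ∗ (stdGaussian E).map (√(1 - exp (-h)) • ·))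
      (Λ * c + (localErrorConst R q * √(Module.finrank ℝ E) * h ^ 2 + e)) := by
  obtain ⟨ρ, hρ_fst, rfl, hρ⟩ := hν
  have : IsProbabilityMeasure ρ :=
    (Measure.isProbabilityMeasure_map_iff measurable_fst.aemeasurable).1 (hρ_fst ▸ inferInstance)
  have : IsProbabilityMeasure ((stdGaussian E).map (√(1 - exp (-h)) • ·)) :=
    Measure.isProbabilityMeasure_map (by fun_prop)
  obtain ⟨κ, hκ_fst, hκ_snd, discretisation⟩ :=
    exists_reverse_coupling hP measurable_fst hρ_fst hq hqu hh hhq hd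
  have := localErrorConst_pos (R := R) (q := q)
  have noiseless := L2Coupled.noiseless_reverseStep hs (by positivity) he hc hρ_fst hρ hκ_fst
    hκ_snd discretisation hscore
  have noised := noiseless.conv ((stdGaussian E).map (√(1 - exp (-h)) • ·))
  rwa [gaussianMix_conv_noise hh (by linarith [one_sub_exp_neg_le (u - h)])] at noised

end ReverseCoupling

section ScoreError

variable {s : E → E} {u h : ℝ} {K : ℝ≥0}

lemma lipschitzWith_add_smul_of_norm_fderiv_le {c : ℝ} (hs : Differentiable ℝ s)
    (h : ∀ x, ‖fderiv ℝ s x + c • ContinuousLinearMap.id ℝ E‖ ≤ K) :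
    LipschitzWith K fun x => s x + c • x := by
  have fderiv_eq (x : E) :
      fderiv ℝ (fun x => s x + c • x) x = fderiv ℝ s x + c • ContinuousLinearMap.id ℝ E :=
    ((hs x).hasFDerivAt.add ((hasFDerivAt_id x).const_smul c)).fderiv
  refine lipschitzWith_of_nnnorm_fderiv_le (𝕜 := ℝ) (by fun_prop) fun x => ?_
  rw [fderiv_eq]
  exact h x

lemma reverseStep_sub_reverseStep (h : ℝ) (s s' : E → E) (x : E) :
    reverseStep h s x - reverseStep h s' x = (exp (h / 2) * (1 - exp (-h))) • (s x - s' x) := by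
  unfold reverseStep; module

lemma abs_exp_half_mul_one_sub_exp_neg_le (hh : 0 ≤ h) (hh1 : h ≤ 1) :
    |exp (h / 2) * (1 - exp (-h))| ≤ 2 * h := by
  have exp_le : exp (h / 2) ≤ 2 := by
    rw [← le_log_iff_exp_le two_pos]
    linarith [log_two_gt_d9]
  have rate_nonneg := one_sub_exp_neg_nonneg hh
  rw [abs_of_nonneg (by positivity)]
  gcongr
  exact one_sub_exp_neg_le h

variable [FiniteDimensional ℝ E] [MeasurableSpace E] {P : Measure E} [IsProbabilityMeasure P]

/-- The mean square error of the score estimate `s` at time `u`. -/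
def ouScoreError (P : Measure E) [SFinite P] (u : ℝ) (s : E → E) : ℝ :=
  ∫ x, ‖ouScore P u x - s x‖ ^ 2 ∂ouLaw P u

lemma ouScoreError_nonneg : 0 ≤ ouScoreError P u s := integral_nonneg fun _ => by positivity

variable [BorelSpace E] {R : ℝ}

lemma memLp_ouScore_sub (hP : ∀ᵐ x ∂P, ‖x‖ ≤ R)
    (hs : LipschitzWith K fun x => s x + (ouStd u ^ 2)⁻¹ • x) :
    MemLp (fun x => ouScore P u x - s x) 2 (ouLaw P u) := by
  have id_memLp : MemLp id 2 (ouLaw P u) :=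
    ⟨by fun_prop, (eLpNorm_id_gaussianMix_le hP le_rfl le_rfl).trans_lt ENNReal.ofReal_lt_top⟩
  have denoiser : MemLp (fun x => posteriorMean P (ouSNR u) ((ouStd u)⁻¹ • x)) 2 (ouLaw P u) :=
    .of_bound (measurable_posteriorMean.comp (by fun_prop)).aestronglyMeasurable R
      (ae_of_all _ fun x => norm_posteriorMean_le hP _)
  have split (x : E) : ouScore P u x - s x =
      ((ouStd u ^ 2)⁻¹ * exp (-u / 2)) • posteriorMean P (ouSNR u) ((ouStd u)⁻¹ • x) -
        (s x + (ouStd u ^ 2)⁻¹ • x) := by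
    rw [ouScore]; module
  simp only [split]
  exact (denoiser.const_smul _).sub (memLp_of_lipschitzWith hs id_memLp)

lemma eLpNorm_reverseStep_ouScore_sub_le (hP : ∀ᵐ x ∂P, ‖x‖ ≤ R)
    (hs : LipschitzWith K fun x => s x + (ouStd u ^ 2)⁻¹ • x) (hh : 0 ≤ h) (hh1 : h ≤ 1) :
    eLpNorm (fun x => reverseStep h (ouScore P u) x - reverseStep h s x) 2 (ouLaw P u) ≤
      ENNReal.ofReal (2 * h * √(ouScoreError P u s)) := by
  simp only [reverseStep_sub_reverseStep]
  exact eLpNorm_smul_le_ofReal _ (abs_exp_half_mul_one_sub_exp_neg_le hh hh1)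
    (eLpNorm_two_eq_ofReal_sqrt (memLp_ouScore_sub hP hs)).le

end ScoreError

section Grid

variable {t : ℕ → ℝ} {N : ℕ}

lemma monotoneOn_Iic_of_le_succ (hts : ∀ k < N, t k ≤ t (k + 1)) : MonotoneOn t (Set.Iic N) :=
  monotoneOn_of_le_add_one Set.ordConnected_Iic fun _ _ _ hk => hts _ hk

lemma sum_sub_mul_exp_le (hts : ∀ k < N, t k ≤ t (k + 1))
    (hstep : ∀ k < N, t (k + 1) - t k ≤ 1 / 2) :
    ∑ k ∈ Finset.range N, (t (k + 1) - t k) * exp ((t (k + 1) - t N) / 2) ≤ 5 / 2 := by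
  set a : ℕ → ℝ := fun k => exp ((t k - t N) / 2) with ha
  have term_le (k : ℕ) (hk : k < N) :
      (t (k + 1) - t k) * a (k + 1) ≤ 5 / 2 * (a (k + 1) - a k) := by
    have decay : a k = exp (-((t (k + 1) - t k) / 2)) * a (k + 1) := by
      rw [ha, ← exp_add]; ring_nf
    have tangent : exp (-((t (k + 1) - t k) / 2)) * (1 + (t (k + 1) - t k) / 2) ≤ 1 := by
      rw [exp_neg, inv_mul_le_one₀ (exp_pos _), add_comm]
      exact add_one_le_exp _
    have rate_le : t (k + 1) - t k ≤ 5 / 2 * (1 - exp (-((t (k + 1) - t k) / 2))) := by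
      nlinarith [hts k hk, hstep k hk, exp_pos (-((t (k + 1) - t k) / 2))]
    rw [decay]
    nlinarith [exp_pos ((t (k + 1) - t N) / 2)]
  calc _ ≤ ∑ k ∈ Finset.range N, 5 / 2 * (a (k + 1) - a k) :=
        Finset.sum_le_sum fun k hk => term_le k (Finset.mem_range.1 hk)
    _ = 5 / 2 * (a N - a 0) := by rw [← Finset.mul_sum, Finset.sum_range_sub]
    _ ≤ 5 / 2 := by
      have : a N = 1 := by simp [ha]
      linarith [exp_pos ((t 0 - t N) / 2)]

lemma sum_mul_mul_sqrt_le {ι : Type*} (S : Finset ι) {a h I : ι → ℝ} (ha : ∀ i ∈ S, 0 ≤ a i)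
    (ha1 : ∀ i ∈ S, a i ≤ 1) (hh : ∀ i ∈ S, 0 ≤ h i) (hI : ∀ i ∈ S, 0 ≤ I i) {A B : ℝ}
    (hA : ∑ i ∈ S, h i * a i ≤ A) (hB : ∑ i ∈ S, h i * I i ≤ B) :
    ∑ i ∈ S, a i * (h i * √(I i)) ≤ √(A * B) := by
  have weights_nonneg : 0 ≤ ∑ i ∈ S, h i * a i :=
    Finset.sum_nonneg fun i hi => mul_nonneg (hh i hi) (ha i hi)
  have cauchy_schwarz : (∑ i ∈ S, a i * (h i * √(I i))) ^ 2 ≤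
      (∑ i ∈ S, h i * a i) * ∑ i ∈ S, h i * I i := by
    refine Finset.sum_sq_le_sum_mul_sum_of_sq_le_mul S (fun i hi => mul_nonneg (hh i hi) (ha i hi))
      (fun i hi => mul_nonneg (hh i hi) (hI i hi)) fun i hi => ?_
    have := mul_nonneg (mul_nonneg (sq_nonneg (h i)) (hI i hi)) (ha i hi)
    rw [mul_pow, mul_pow, sq_sqrt (hI i hi)]
    nlinarith [ha1 i hi]
  exact le_sqrt_of_sq_le (cauchy_schwarz.trans
    (mul_le_mul hA hB (Finset.sum_nonneg fun i hi => mul_nonneg (hh i hi) (hI i hi))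
      (weights_nonneg.trans hA)))

end Grid

section Chain

variable {d : ℕ} {P : Measure (EuclideanSpace ℝ (Fin d))} {R T : ℝ} {N : ℕ} {t : ℕ → ℝ}
  {s : ℝ → EuclideanSpace ℝ (Fin d) → EuclideanSpace ℝ (Fin d)}

lemma stdGaussE_eq_stdGaussian : stdGaussE d = stdGaussian (EuclideanSpace ℝ (Fin d)) := by
  rw [← map_pi_eq_stdGaussian]; rfl

lemma stepMap_eq_reverseStep (s : ℝ → EuclideanSpace ℝ (Fin d) → EuclideanSpace ℝ (Fin d))
    (t : ℕ → ℝ) (T : ℝ) (k : ℕ) :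
    stepMap s t T k = reverseStep (t (k + 1) - t k) (s (T - t k)) := by
  funext x
  rw [stepMap, reverseStep, ← exp_mul, neg_sub]
  congr 2
  ring

lemma schemeLaw_succ (s : ℝ → EuclideanSpace ℝ (Fin d) → EuclideanSpace ℝ (Fin d)) (t : ℕ → ℝ)
    (T : ℝ) (k : ℕ) :
    schemeLaw (stdGaussE d) s t T (k + 1) =
      (schemeLaw (stdGaussE d) s t T k).map (reverseStep (t (k + 1) - t k) (s (T - t k))) ∗
        (stdGaussian (EuclideanSpace ℝ (Fin d))).map (√(1 - exp (-(t (k + 1) - t k))) • ·) := by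
  rw [schemeLaw, stepMap_eq_reverseStep, ← stdGaussE_eq_stdGaussian, neg_sub]
  rfl

lemma isProbabilityMeasure_schemeLaw (hs : ∀ k < N, Measurable (s (T - t k))) :
    ∀ k ≤ N, IsProbabilityMeasure (schemeLaw (stdGaussE d) s t T k) := by
  intro k hk
  induction k with
  | zero => rw [schemeLaw, stdGaussE_eq_stdGaussian]; infer_instance
  | succ k ih =>
    have := ih (by lia)
    have := Measure.isProbabilityMeasure_map (μ := schemeLaw (stdGaussE d) s t T k)
      (measurable_reverseStep (h := t (k + 1) - t k) (hs k hk)).aemeasurable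
    have := Measure.isProbabilityMeasure_map (μ := stdGaussian (EuclideanSpace ℝ (Fin d)))
      (f := (√(1 - exp (-(t (k + 1) - t k))) • ·)) (by fun_prop)
    rw [schemeLaw_succ]
    infer_instance

lemma ouDensityIso_eq_gaussianMixPDF {r : ℝ} (hr : 0 < r) :
    ouDensityIso P r = gaussianMixPDF P (exp (-r / 2)) (ouStd r) := by
  funext x
  have hσ := ouStd_pos hr
  have exponent (y : EuclideanSpace ℝ (Fin d)) :
      exp (-‖x - exp (-r / 2) • y‖ ^ 2 / (2 * ouStd r ^ 2)) =
        exp (-‖(ouStd r)⁻¹ • x‖ ^ 2 / 2) *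
          exp (gaussLogLik (exp (-r / 2) / ouStd r) ((ouStd r)⁻¹ • x) y) := by
    rw [← exp_add, gaussLogLik, norm_sub_sq_real, norm_smul, norm_smul, inner_smul_right,
      real_inner_smul_left, norm_eq_abs, norm_eq_abs, mul_pow, mul_pow, sq_abs, sq_abs]
    congr 1
    field_simp
    ring
  have normalisation : (2 * π * ouStd r ^ 2) ^ (-(d : ℝ) / 2) =
      (ouStd r ^ d)⁻¹ * (2 * π) ^ (-(d : ℝ) / 2) := by
    rw [mul_rpow (by positivity) (by positivity), mul_comm, ← rpow_natCast (ouStd r) 2,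
      ← rpow_mul hσ.le, ← rpow_natCast (ouStd r) d, ← rpow_neg hσ.le]
    congr 2
    push_cast
    ring
  rw [ouDensityIso, gaussianMixPDF, stdGaussianPDF, gaussEvidence, finrank_euclideanSpace_fin,
    ← ouStd_sq hr.le, normalisation]
  simp only [exponent, integral_const_mul]
  ring

variable [IsProbabilityMeasure P]

lemma ouLaw_eq_withDensity_ouDensityIso {r : ℝ} (hr : 0 < r) :
    ouLaw P r = volume.withDensity fun x => ENNReal.ofReal (ouDensityIso P r x) := by
  rw [ouLaw, gaussianMix_eq_withDensity (ouStd_pos hr), ouDensityIso_eq_gaussianMixPDF hr]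

lemma gradient_log_ouDensityIso (hP : ∀ᵐ x ∂P, ‖x‖ ≤ R) {r : ℝ} (hr : 0 < r)
    (x : EuclideanSpace ℝ (Fin d)) :
    gradient (fun z => log (ouDensityIso P r z)) x = ouScore P r x := by
  rw [ouDensityIso_eq_gaussianMixPDF hr]
  exact (hasGradientAt_log_gaussianMixPDF hP (ouStd_pos hr) x).gradient

lemma integral_norm_gradient_log_sub_sq_mul_eq_ouScoreError (hP : ∀ᵐ x ∂P, ‖x‖ ≤ R) {r : ℝ}
    (hr : 0 < r) (s : EuclideanSpace ℝ (Fin d) → EuclideanSpace ℝ (Fin d)) :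
    ∫ x, ‖gradient (fun z => log (ouDensityIso P r z)) x - s x‖ ^ 2 * ouDensityIso P r x =
      ouScoreError P r s := by
  have density_pos (x : EuclideanSpace ℝ (Fin d)) : 0 ≤ ouDensityIso P r x := by
    rw [ouDensityIso_eq_gaussianMixPDF hr]
    exact (gaussianMixPDF_pos (ouStd_pos hr) x).le
  have density_measurable : Measurable (ouDensityIso P r) := by
    rw [ouDensityIso_eq_gaussianMixPDF hr]
    exact measurable_gaussianMixPDF
  rw [ouScoreError, ouLaw_eq_withDensity_ouDensityIso hr,
    integral_withDensity_eq_integral_toReal_smul density_measurable.ennreal_ofReal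
      (ae_of_all _ fun _ => ENNReal.ofReal_lt_top)]
  simp only [ENNReal.toReal_ofReal (density_pos _), gradient_log_ouDensityIso hP hr, smul_eq_mul,
    mul_comm]

end Chain

section Telescope

variable {t : ℕ → ℝ} {N : ℕ} {L T τ : ℝ}

/-- The exponent accumulated over the first `k` steps of the grid `t` by the logarithms of the
Lipschitz constants in `lipschitzWith_reverseStep`. -/
def growthExp (L T : ℝ) (t : ℕ → ℝ) (k : ℕ) : ℝ := L * (exp (-(T - t k)) - exp (-T)) - t k / 2

/-- The solution of the linear recursion `c (k + 1) = exp (g (k + 1) - g k) * c k + e k` with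
`c 0 = exp (g 0) * c₀`: the bound that discrete Grönwall gives for the error after `k` steps. -/
def accumulatedError (g e : ℕ → ℝ) (c₀ : ℝ) (k : ℕ) : ℝ :=
  exp (g k) * (c₀ + ∑ j ∈ Finset.range k, exp (-g (j + 1)) * e j)

lemma accumulatedError_succ (g e : ℕ → ℝ) (c₀ : ℝ) (k : ℕ) :
    accumulatedError g e c₀ (k + 1) = exp (g (k + 1) - g k) * accumulatedError g e c₀ k + e k := by
  have cancel : exp (g (k + 1)) * exp (-g (k + 1)) = 1 := by rw [← exp_add]; simp
  have shift : exp (g (k + 1) - g k) * exp (g k) = exp (g (k + 1)) := by rw [← exp_add]; ring_nf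
  rw [accumulatedError, accumulatedError, Finset.sum_range_succ, ← mul_assoc, shift]
  linear_combination e k * cancel

lemma accumulatedError_nonneg {g e : ℕ → ℝ} {c₀ : ℝ} (hc₀ : 0 ≤ c₀) {k : ℕ}
    (he : ∀ j < k, 0 ≤ e j) : 0 ≤ accumulatedError g e c₀ k := by
  have := Finset.sum_nonneg fun j hj =>
    mul_nonneg (exp_pos (-g (j + 1))).le (he j (Finset.mem_range.1 hj))
  unfold accumulatedError
  positivity

lemma growthExp_sub_le {N : ℕ} (hL : 0 ≤ L) (hT : t N ≤ T) (k : ℕ) :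
    growthExp L T t N - growthExp L T t k ≤ L + (t k - t N) / 2 := by
  have : exp (-(T - t N)) - exp (-(T - t k)) ≤ 1 := by
    linarith [exp_le_one_iff.2 (show -(T - t N) ≤ 0 by linarith), exp_pos (-(T - t k))]
  unfold growthExp
  nlinarith

lemma accumulatedError_growthExp_le (hL : 0 ≤ L) (ht0 : t 0 = 0) (hT : t N ≤ T)
    {e : ℕ → ℝ} (he : ∀ k < N, 0 ≤ e k) {c₀ : ℝ} (hc₀ : 0 ≤ c₀) :
    accumulatedError (growthExp L T t) e c₀ N ≤
      exp L * (exp (-t N / 2) * c₀ +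
        ∑ k ∈ Finset.range N, exp ((t (k + 1) - t N) / 2) * e k) := by
  have weight_le (k : ℕ) : exp (growthExp L T t N) * exp (-growthExp L T t k) ≤
      exp L * exp ((t k - t N) / 2) := by
    rw [← exp_add, ← exp_add, exp_le_exp, ← sub_eq_add_neg]
    exact growthExp_sub_le hL hT k
  have start : exp (growthExp L T t N) ≤ exp L * exp (-t N / 2) := by
    simpa [growthExp, ht0] using weight_le 0
  rw [accumulatedError, mul_add, mul_add, Finset.mul_sum, Finset.mul_sum]
  simp only [← mul_assoc]
  exact add_le_add (mul_le_mul_of_nonneg_right start hc₀) (Finset.sum_le_sum fun k hk =>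
    mul_le_mul_of_nonneg_right (weight_le (k + 1)) (he k (Finset.mem_range.1 hk)))

lemma sum_exp_mul_local_error_le {I : ℕ → ℝ} {a B : ℝ} (ha : 0 ≤ a) (hτ0 : 0 ≤ τ)
    (hts : ∀ k < N, t k ≤ t (k + 1)) (hτ : ∀ k < N, t (k + 1) - t k ≤ τ) (hτ1 : τ ≤ 1 / 2)
    (hI : ∀ k < N, 0 ≤ I k) (hB : ∑ k ∈ Finset.range N, (t (k + 1) - t k) * I k ≤ B) :
    ∑ k ∈ Finset.range N, exp ((t (k + 1) - t N) / 2) *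
        (a * (t (k + 1) - t k) ^ 2 + 2 * (t (k + 1) - t k) * √(I k)) ≤
      5 / 2 * a * τ + 2 * √(5 / 2 * B) := by
  have total_weight := sum_sub_mul_exp_le hts fun k hk => (hτ k hk).trans hτ1
  have weight_le_one (k : ℕ) (hk : k ∈ Finset.range N) : exp ((t (k + 1) - t N) / 2) ≤ 1 := by
    have hkN := Finset.mem_range.1 hk
    have := monotoneOn_Iic_of_le_succ hts (Set.mem_Iic.2 hkN) (Set.mem_Iic.2 le_rfl) hkN
    exact exp_le_one_iff.2 (by linarith)
  have score_part := sum_mul_mul_sqrt_le (Finset.range N) (h := fun k => t (k + 1) - t k)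
    (fun k _ => (exp_pos ((t (k + 1) - t N) / 2)).le) weight_le_one
    (fun k hk => sub_nonneg.2 (hts k (Finset.mem_range.1 hk)))
    (fun k hk => hI k (Finset.mem_range.1 hk)) total_weight hB
  calc _ ≤ ∑ k ∈ Finset.range N, (a * τ * ((t (k + 1) - t k) * exp ((t (k + 1) - t N) / 2)) +
        2 * (exp ((t (k + 1) - t N) / 2) * ((t (k + 1) - t k) * √(I k)))) := by
        refine Finset.sum_le_sum fun k hk => ?_
        have step_nonneg := sub_nonneg.2 (hts k (Finset.mem_range.1 hk))
        have : 0 ≤ a * (t (k + 1) - t k) * exp ((t (k + 1) - t N) / 2) := by positivity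
        nlinarith [mul_le_mul_of_nonneg_left (hτ k (Finset.mem_range.1 hk)) this]
    _ ≤ a * τ * (5 / 2) + 2 * √(5 / 2 * B) := by
        rw [Finset.sum_add_distrib, ← Finset.mul_sum, ← Finset.mul_sum]
        gcongr
    _ = 5 / 2 * a * τ + 2 * √(5 / 2 * B) := by ring

end Telescope

section ReverseError

variable {L R q u h c : ℝ} {s : E → E}

variable [FiniteDimensional ℝ E] [MeasurableSpace E] [BorelSpace E] {P : Measure E}
  [IsProbabilityMeasure P] {ν : Measure E}

lemma L2Coupled.reverseStep_of_norm_fderiv_le (hP : ∀ᵐ x ∂P, ‖x‖ ≤ R) (hq : 0 < q)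
    (hqu : q ≤ 1 - exp (-(u - h))) (hh : 0 ≤ h) (hhq : 2 * h ≤ q) (hd : 1 ≤ Module.finrank ℝ E)
    (hL : 0 ≤ L) (hs : Differentiable ℝ s)
    (hlip : ∀ x, ‖fderiv ℝ s x + (1 - exp (-u))⁻¹ • ContinuousLinearMap.id ℝ E‖ ≤ L * exp (-u))
    (hc : 0 ≤ c) (hν : L2Coupled (ouLaw P u) ν c) :
    L2Coupled (ouLaw P (u - h))
      (ν.map (reverseStep h s) ∗ (stdGaussian E).map (√(1 - exp (-h)) • ·))
      (exp (-h / 2 + L * (exp (-(u - h)) - exp (-u))) * c +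
        (localErrorConst R q * √(Module.finrank ℝ E) * h ^ 2 + 2 * h * √(ouScoreError P u s))) := by
  have huh : 0 < u - h := by
    have : exp (-(u - h)) < 1 := by linarith
    linarith [exp_lt_one_iff.1 this]
  have hu : 0 < u := by linarith
  have hh1 : h ≤ 1 := by linarith [exp_pos (-(u - h))]
  have drift_lipschitz : LipschitzWith ⟨L * exp (-u), by positivity⟩
      fun x => s x + (ouStd u ^ 2)⁻¹ • x := by
    rw [ouStd_sq hu.le]
    exact lipschitzWith_add_smul_of_norm_fderiv_le hs hlip
  have step_lipschitz := lipschitzWith_reverseStep (L := ⟨L, hL⟩) hh (by linarith) hu rfl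
    (Λ := ⟨exp (-h / 2 + L * (exp (-(u - h)) - exp (-u))), (exp_pos _).le⟩) rfl drift_lipschitz
  exact hν.reverseStep_conv_noise hP hq hqu hh hhq hd step_lipschitz (by positivity) hc
    (eLpNorm_reverseStep_ouScore_sub_le hP drift_lipschitz hh hh1)

lemma l2Coupled_ouLaw_stdGaussian (hP : ∀ᵐ x ∂P, ‖x‖ ≤ R) {T : ℝ} (hT : 0 ≤ T) :
    L2Coupled (ouLaw P T) (stdGaussian E) (exp (-T / 2) * (R + √(Module.finrank ℝ E))) := by
  have std_close : |ouStd T - 1| ≤ exp (-T / 2) := by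
    have : exp (-T) ≤ exp (-T / 2) := exp_le_exp.2 (by linarith)
    rw [abs_sub_comm, abs_of_nonneg (sub_nonneg.2 (ouStd_le_one T))]
    nlinarith [ouStd_sq hT, ouStd_le_one T, ouStd_nonneg T]
  rw [mul_add]
  exact l2Coupled_gaussianMix_stdGaussian hP (abs_of_pos (exp_pos _)).le std_close

end ReverseError

lemma sq_exp_mul_exp_mul_add_sqrt_le {R m : ℝ} (x y : ℝ) (hm : 0 ≤ m) :
    (exp (-x / 2) * (exp (-y / 2) * (R + √m))) ^ 2 ≤ 2 * (exp (-(x + y)) * (R ^ 2 + m)) := by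
  have split : exp (-(x + y)) = exp (-x / 2) ^ 2 * exp (-y / 2) ^ 2 := by
    rw [exp_half_sq, exp_half_sq, ← exp_add]; ring_nf
  have sum_sq : (R + √m) ^ 2 ≤ 2 * (R ^ 2 + m) := by
    simpa only [sq_sqrt hm] using add_sq_le (a := R) (b := √m)
  calc _ = exp (-(x + y)) * (R + √m) ^ 2 := by rw [split]; ring
    _ ≤ exp (-(x + y)) * (2 * (R ^ 2 + m)) := by gcongr
    _ = 2 * (exp (-(x + y)) * (R ^ 2 + m)) := by ring

lemma localErrorConst_sq (R q : ℝ) :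
    localErrorConst R q ^ 2 = 25 * exp (6 * (R / q) ^ 2 + 4 / q) := by
  rw [localErrorConst, mul_pow, ← exp_nat_mul]; ring_nf

lemma sq_total_error_le {q L R m x y τ B : ℝ} (hm : 0 ≤ m) (hB : 0 ≤ B) (hq : 0 < q) :
    (exp L * (exp (-x / 2) * (exp (-y / 2) * (R + √m)) +
        (5 / 2 * (localErrorConst R q * √m) * τ + 2 * √(5 / 2 * B)))) ^ 2 ≤
      2 * exp (7 + 2 * L + 6 * (R / q) ^ 2 + 4 / q) *
        (exp (-(x + y)) * (R ^ 2 + m) + B + m * τ ^ 2) := by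
  have three_squares (a b c : ℝ) : (a + (b + c)) ^ 2 ≤ 3 * (a ^ 2 + b ^ 2 + c ^ 2) := by
    nlinarith [sq_nonneg (a - b), sq_nonneg (a - c), sq_nonneg (b - c)]
  set M := exp (6 * (R / q) ^ 2 + 4 / q) with hM
  have initial := sq_exp_mul_exp_mul_add_sqrt_le (R := R) x y hm
  have discretisation :
      (5 / 2 * (localErrorConst R q * √m) * τ) ^ 2 = 625 / 4 * M * (m * τ ^ 2) := by
    rw [mul_pow, mul_pow, mul_pow, localErrorConst_sq, sq_sqrt hm]; ring
  have score : (2 * √(5 / 2 * B)) ^ 2 = 10 * B := by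
    rw [mul_pow, sq_sqrt (by positivity)]; ring
  have one_le_M : 1 ≤ M := one_le_exp (by positivity)
  have exp_seven : 235 ≤ exp 7 := by
    calc (235 : ℝ) ≤ 2.7 ^ 7 := by norm_num
      _ ≤ exp 1 ^ 7 := by gcongr; linarith [exp_one_gt_d9]
      _ = exp 7 := by rw [← exp_nat_mul]; norm_num
  calc _ ≤ exp L ^ 2 * (3 * (2 * (exp (-(x + y)) * (R ^ 2 + m)) + 625 / 4 * M * (m * τ ^ 2) +
        10 * B)) := by
        rw [mul_pow, ← discretisation, ← score]
        gcongr
        exact (three_squares _ _ _).trans (by gcongr)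
    _ ≤ exp L ^ 2 * (2 * 235 * M * (exp (-(x + y)) * (R ^ 2 + m) + B + m * τ ^ 2)) := by
        have : 0 ≤ exp (-(x + y)) * (R ^ 2 + m) := by positivity
        have : 0 ≤ m * τ ^ 2 := by positivity
        refine mul_le_mul_of_nonneg_left ?_ (sq_nonneg _)
        nlinarith
    _ ≤ exp L ^ 2 * (2 * exp 7 * M * (exp (-(x + y)) * (R ^ 2 + m) + B + m * τ ^ 2)) := by gcongr
    _ = 2 * exp (7 + 2 * L + 6 * (R / q) ^ 2 + 4 / q) *
        (exp (-(x + y)) * (R ^ 2 + m) + B + m * τ ^ 2) := by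
        have : exp (7 + 2 * L + 6 * (R / q) ^ 2 + 4 / q) = exp 7 * exp L ^ 2 * M := by
          rw [hM, ← exp_nat_mul, ← exp_add, ← exp_add]; push_cast; ring_nf
        rw [this]; ring

section Convergence

variable {d : ℕ} {P : Measure (EuclideanSpace ℝ (Fin d))} [IsProbabilityMeasure P]
  {R T L q τ B : ℝ} {N : ℕ} {t : ℕ → ℝ}
  {s : ℝ → EuclideanSpace ℝ (Fin d) → EuclideanSpace ℝ (Fin d)}

/-- The error added by step `j` of the scheme: discretisation plus score estimation. -/
def stepError (P : Measure (EuclideanSpace ℝ (Fin d))) [SFinite P] (R q : ℝ)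
    (s : ℝ → EuclideanSpace ℝ (Fin d) → EuclideanSpace ℝ (Fin d)) (t : ℕ → ℝ) (T : ℝ) (j : ℕ) : ℝ :=
  localErrorConst R q * √d * (t (j + 1) - t j) ^ 2 +
    2 * (t (j + 1) - t j) * √(ouScoreError P (T - t j) (s (T - t j)))

lemma stepError_nonneg {j : ℕ} (hj : t j ≤ t (j + 1)) : 0 ≤ stepError P R q s t T j := by
  have := sub_nonneg.2 hj
  have := localErrorConst_pos (R := R) (q := q)
  unfold stepError
  positivity

lemma l2Coupled_ouLaw_schemeLaw (hd : 1 ≤ d) (hP : ∀ᵐ x ∂P, ‖x‖ ≤ R) (hL : 0 ≤ L) (hT : 0 ≤ T)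
    (ht0 : t 0 = 0) (hts : ∀ k < N, t k ≤ t (k + 1)) (hq : 0 < q)
    (hqT : q ≤ 1 - exp (-(T - t N))) (hstep : ∀ k < N, 2 * (t (k + 1) - t k) ≤ q)
    (hs : ∀ k < N, Differentiable ℝ (s (T - t k)))
    (hlip : ∀ k < N, ∀ x, ‖fderiv ℝ (s (T - t k)) x +
      (1 - exp (-(T - t k)))⁻¹ • ContinuousLinearMap.id ℝ (EuclideanSpace ℝ (Fin d))‖ ≤
        L * exp (-(T - t k))) :
    ∀ k ≤ N, L2Coupled (ouLaw P (T - t k)) (schemeLaw (stdGaussE d) s t T k)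
      (accumulatedError (growthExp L T t) (stepError P R q s t T) (exp (-T / 2) * (R + √d)) k) := by
  intro k hk
  have hR : 0 ≤ R := nonneg_of_ae_norm_le hP
  induction k with
  | zero =>
    rw [schemeLaw, stdGaussE_eq_stdGaussian]
    simpa [accumulatedError, growthExp, ht0] using l2Coupled_ouLaw_stdGaussian hP hT
  | succ k ih =>
    have hkN : k < N := hk
    have before_end : t (k + 1) ≤ t N :=
      monotoneOn_Iic_of_le_succ hts (Set.mem_Iic.2 hk) (Set.mem_Iic.2 le_rfl) hk
    have time_eq : T - t k - (t (k + 1) - t k) = T - t (k + 1) := by ring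
    have noise_le : q ≤ 1 - exp (-(T - t k - (t (k + 1) - t k))) := by
      rw [time_eq]
      exact hqT.trans (by gcongr)
    have error_nonneg := accumulatedError_nonneg (g := growthExp L T t) (k := k)
      (e := stepError P R q s t T) (show 0 ≤ exp (-T / 2) * (R + √d) by positivity)
      fun j hj => stepError_nonneg (hts j (hj.trans hkN))
    have step := (ih hkN.le).reverseStep_of_norm_fderiv_le hP hq noise_le
      (sub_nonneg.2 (hts k hkN)) (hstep k hkN) (by simpa using hd) hL (hs k hkN) (hlip k hkN)
      error_nonneg
    have exponent_eq : -(t (k + 1) - t k) / 2 + L * (exp (-(T - t (k + 1))) - exp (-(T - t k))) =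
        growthExp L T t (k + 1) - growthExp L T t k := by
      unfold growthExp; ring
    rw [time_eq, exponent_eq, finrank_euclideanSpace_fin] at step
    rw [schemeLaw_succ, accumulatedError_succ]
    exact step

lemma l2Coupled_ouLaw_schemeLaw_of_sum_le (hP : ∀ᵐ x ∂P, ‖x‖ ≤ R) (hL : 0 ≤ L) (hT : 0 ≤ T)
    (ht0 : t 0 = 0) (hts : ∀ k < N, t k ≤ t (k + 1)) (htN : t N < T) (hτ0 : 0 ≤ τ)
    (hτ : ∀ k < N, t (k + 1) - t k ≤ τ) (hτq : 2 * τ ≤ 1 - exp (-(T - t N)))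
    (hs : ∀ k < N, Differentiable ℝ (s (T - t k)))
    (hlip : ∀ k < N, ∀ x, ‖fderiv ℝ (s (T - t k)) x +
      (1 - exp (-(T - t k)))⁻¹ • ContinuousLinearMap.id ℝ (EuclideanSpace ℝ (Fin d))‖ ≤
        L * exp (-(T - t k)))
    (hB : ∑ k ∈ Finset.range N, (t (k + 1) - t k) * ouScoreError P (T - t k) (s (T - t k)) ≤ B) :
    L2Coupled (ouLaw P (T - t N)) (schemeLaw (stdGaussE d) s t T N)
      (exp L * (exp (-t N / 2) * (exp (-T / 2) * (R + √d)) +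
        (5 / 2 * (localErrorConst R (1 - exp (-(T - t N))) * √d) * τ + 2 * √(5 / 2 * B)))) := by
  have hR : 0 ≤ R := nonneg_of_ae_norm_le hP
  have noise_pos : 0 < 1 - exp (-(T - t N)) := sub_pos.2 (exp_lt_one_iff.2 (by linarith))
  have const_nonneg : 0 ≤ localErrorConst R (1 - exp (-(T - t N))) * √d :=
    mul_nonneg localErrorConst_pos.le (sqrt_nonneg _)
  rcases d.eq_zero_or_pos with rfl | hd
  · have := isProbabilityMeasure_schemeLaw (fun k hk => (hs k hk).continuous.measurable) N le_rfl
    exact l2Coupled_of_subsingleton _ _ _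
  refine (l2Coupled_ouLaw_schemeLaw hd hP hL hT ht0 hts noise_pos le_rfl
    (fun k hk => by linarith [hτ k hk]) hs hlip N le_rfl).mono ?_
  refine (accumulatedError_growthExp_le hL ht0 htN.le (fun k hk => stepError_nonneg (hts k hk))
    (by positivity)).trans ?_
  gcongr
  exact sum_exp_mul_local_error_le const_nonneg hτ0 hts hτ
      (by linarith [exp_pos (-(T - t N))]) (fun _ _ => ouScoreError_nonneg) hB

end Convergence

lemma le_half_of_le_min {L q τ : ℝ} (hL : 0 ≤ L) (hq : 0 < q)
    (hτ : τ ≤ min 1 (1 / ((L + 1 / q) * exp 1))) : τ ≤ q / 2 := by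
  have : 1 / q * 2 ≤ (L + 1 / q) * exp 1 := by
    gcongr
    · exact le_add_of_nonneg_left hL
    · linarith [exp_one_gt_d9]
  calc τ ≤ 1 / ((L + 1 / q) * exp 1) := hτ.trans (min_le_right _ _)
    _ ≤ 1 / (1 / q * 2) := by gcongr
    _ = q / 2 := by field_simp

theorem stmt12_general {d : ℕ}
    (P₀ : Measure (EuclideanSpace ℝ (Fin d))) [IsProbabilityMeasure P₀]
    (R : ℝ)
    (hsupp : P₀ (Metric.closedBall (0 : EuclideanSpace ℝ (Fin d)) R)ᶜ = 0)
    (δ : ℝ) (hδ0 : 0 < δ)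
    (L : ℝ)
    (T : ℝ) (hT : δ < T)
    (N : ℕ) (t : ℕ → ℝ)
    (ht0 : t 0 = 0) (htN : t N = T - δ) (hts : ∀ k < N, t k ≤ t (k + 1))
    (τ : ℝ) (hτ : ∀ k < N, t (k + 1) - t k ≤ τ)
    (hτsmall : τ ≤ (1 - exp (-δ)) / 2)
    (sθ : ℝ → EuclideanSpace ℝ (Fin d) → EuclideanSpace ℝ (Fin d))
    (hsθreg : ∀ k < N, Differentiable ℝ (sθ (T - t k)))
    (hsθlip : ∀ k < N, ∀ x,
      ‖fderiv ℝ (sθ (T - t k)) x +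
          (1 - exp (-(T - t k)))⁻¹ • ContinuousLinearMap.id ℝ (EuclideanSpace ℝ (Fin d))‖
        ≤ L * exp (-(T - t k)))
    (ε : ℝ)
    (herr : ∑ k ∈ Finset.range N, (t (k + 1) - t k) *
        ∫ x, ‖gradient (fun z => log (ouDensityIso P₀ (T - t k) z)) x
            - sθ (T - t k) x‖ ^ 2 * ouDensityIso P₀ (T - t k) x
      ≤ ε ^ 2 * T) :
    ∃ cpl : Measure (EuclideanSpace ℝ (Fin d) × EuclideanSpace ℝ (Fin d)),
      IsProbabilityMeasure cpl ∧
      cpl.map Prod.fst = volume.withDensity (fun x => ENNReal.ofReal (ouDensityIso P₀ δ x)) ∧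
      cpl.map Prod.snd = schemeLaw (stdGaussE d) sθ t T N ∧
      ∫ z, ‖z.1 - z.2‖ ^ 2 ∂cpl
        ≤ 2 * exp (7 + 2 * L + 6 * (R / (1 - exp (-δ))) ^ 2 + 4 / (1 - exp (-δ))) *
          (exp (-2 * T + δ) * (R ^ 2 + d) + ε ^ 2 * T + d * τ ^ 2) := by
  have hP : ∀ᵐ x ∂P₀, ‖x‖ ≤ R := by
    filter_upwards [mem_ae_iff.2 hsupp] with x hx using mem_closedBall_zero_iff.1 hx
  have hN : 0 < N := Nat.pos_of_ne_zero fun h => by subst h; linarith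
  have hτ0 : 0 ≤ τ := (sub_nonneg.2 (hts 0 hN)).trans (hτ 0 hN)
  have hL : 0 ≤ L := nonneg_of_mul_nonneg_left ((norm_nonneg _).trans (hsθlip 0 hN 0)) (exp_pos _)
  have hR : 0 ≤ R := nonneg_of_ae_norm_le hP
  have hT0 : 0 ≤ T := (hδ0.trans hT).le
  have hq : 0 < 1 - exp (-δ) := sub_pos.2 (exp_lt_one_iff.2 (by linarith))
  have end_time : T - t N = δ := by rw [htN]; ring
  have score_error : ∑ k ∈ Finset.range N,
      (t (k + 1) - t k) * ouScoreError P₀ (T - t k) (sθ (T - t k)) ≤ ε ^ 2 * T := by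
    refine (Finset.sum_congr rfl fun k hk => ?_).trans_le herr
    have := monotoneOn_Iic_of_le_succ hts (Set.mem_Iic.2 (Finset.mem_range.1 hk).le)
      (Set.mem_Iic.2 le_rfl) (Finset.mem_range.1 hk).le
    rw [integral_norm_gradient_log_sub_sq_mul_eq_ouScoreError hP (by linarith)]
  have coupled := l2Coupled_ouLaw_schemeLaw_of_sum_le hP hL hT0 ht0 hts (by linarith) hτ0 hτ
    (by rw [end_time]; linarith) hsθreg hsθlip score_error
  rw [end_time, htN] at coupled
  have := localErrorConst_pos (R := R) (q := 1 - exp (-δ))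
  obtain ⟨ρ, hρ, hfst, hsnd, hcost⟩ := coupled.exists_integral_norm_sub_sq_le (by positivity)
  refine ⟨ρ, hρ, hfst.trans (ouLaw_eq_withDensity_ouDensityIso hδ0), hsnd,
    hcost.trans ((sq_total_error_le d.cast_nonneg (by positivity) hq).trans_eq ?_)⟩
  rw [show -(T - δ + T) = -2 * T + δ by ring]

/-- Theorem 3.10: the Wasserstein-2 convergence bound for bounded-support targets
under early stopping. -/
theorem stmt12 {d : ℕ}
    (P₀ : Measure (EuclideanSpace ℝ (Fin d))) [IsProbabilityMeasure P₀]
    (R : ℝ)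
    (hsupp : P₀ (Metric.closedBall (0 : EuclideanSpace ℝ (Fin d)) R)ᶜ = 0)
    (δ : ℝ) (hδ0 : 0 < δ) (hδ1 : δ ≤ 1)
    (L₀ L₂ K₂ : ℝ)
    (hL₀ : L₀ = 3 * R ^ 2 / (1 - Real.exp (-δ)) ^ 2)
    (hL₂ : L₂ = 1 / (1 - Real.exp (-δ)))
    (hK₂ : K₂ = 2 * Real.exp (7 + 12 * R ^ 2 / (1 - Real.exp (-δ)) ^ 2 +
      4 / (1 - Real.exp (-δ))))
    (T : ℝ) (hT : δ < T)
    (N : ℕ) (t : ℕ → ℝ)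
    (ht0 : t 0 = 0) (htN : t N = T - δ) (hts : ∀ k < N, t k ≤ t (k + 1))
    (τ : ℝ) (hτ : ∀ k < N, t (k + 1) - t k ≤ τ)
    (hτsmall : τ ≤ min 1 (1 / ((L₀ + L₂) * Real.exp 1)))
    (sθ : ℝ → EuclideanSpace ℝ (Fin d) → EuclideanSpace ℝ (Fin d))
    (hsθreg : ∀ k < N, ContDiff ℝ 1 (sθ (T - t k)))
    (hsθlip : ∀ k < N, ∀ x,
      ‖fderiv ℝ (sθ (T - t k)) x +
          (1 - Real.exp (-(T - t k)))⁻¹ • ContinuousLinearMap.id ℝ (EuclideanSpace ℝ (Fin d))‖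
        ≤ L₀ * Real.exp (-(T - t k)))
    (ε : ℝ)
    (herr : ∑ k ∈ Finset.range N, (t (k + 1) - t k) *
        ∫ x, ‖gradient (fun z => Real.log (ouDensityIso P₀ (T - t k) z)) x
            - sθ (T - t k) x‖ ^ 2 * ouDensityIso P₀ (T - t k) x
      ≤ ε ^ 2 * T) :
    ∃ cpl : Measure (EuclideanSpace ℝ (Fin d) × EuclideanSpace ℝ (Fin d)),
      IsProbabilityMeasure cpl ∧
      cpl.map Prod.fst = volume.withDensity (fun x => ENNReal.ofReal (ouDensityIso P₀ δ x)) ∧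
      cpl.map Prod.snd = schemeLaw (stdGaussE d) sθ t T N ∧
      ∫ z, ‖z.1 - z.2‖ ^ 2 ∂cpl
        ≤ K₂ * (Real.exp (-2 * T + δ) * (R ^ 2 + d) + ε ^ 2 * T + d * τ ^ 2) := by
  subst hL₀ hL₂ hK₂
  have hq : 0 < 1 - exp (-δ) := sub_pos.2 (exp_lt_one_iff.2 (by linarith))
  have exponent_eq : 7 + 12 * R ^ 2 / (1 - exp (-δ)) ^ 2 + 4 / (1 - exp (-δ)) =
      7 + 2 * (3 * R ^ 2 / (1 - exp (-δ)) ^ 2) + 6 * (R / (1 - exp (-δ))) ^ 2 +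
        4 / (1 - exp (-δ)) := by rw [div_pow]; ring
  rw [exponent_eq]
  exact stmt12_general P₀ R hsupp δ hδ0 _ T hT N t ht0 htN hts τ hτ
    (le_half_of_le_min (by positivity) hq hτsmall) sθ
    (fun k hk => (hsθreg k hk).differentiable one_ne_zero) hsθlip ε herr
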